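/- Fix finite nonempty sets SP₀, SQ₀, SP₁, SQ₁ ⊂ ℕ with 0 ∈ SP₀ ∪ SQ₀, 0 ∈ SP₁ ∪ SQ₁, gcd of the nonzero elements of SP₀ ∪ SQ₀ ∪ SP₁ ∪ SQ₁ equal to 1, a₀n = max(SP₀ ∪ SQ₀) ≥ 1, a₁m = max(SP₁ ∪ SQ₁) ≥ 1. Write L₀ = min SQ₀, R₀ = max SQ₀, L₁ = min SQ₁, R₁ = max SQ₁, and define F = (R₀ − L₀) + [0 ∈ SQ₁]·L₀ + [a₁m ∈ SQ₁]·(a₀n − R₀), F' = (R₁ − L₁) + [0 ∈ SQ₀]·L₁ + [a₀n ∈ SQ₀]·(a₁m − R₁), and δ = (a₀n − R₀)·L₁ − L₀·(a₁m − R₁). Assume F ≠ a₀n. Then: (a) either (0 ∉ SQ₀ and 0 ∉ SQ₁) or (a₀n ∉ SQ₀ and a₁m ∉ SQ₁), and F' ≠ a₁m; (b) for generic coefficients, for every irreducible φ ∈ ℂ[x,y] with φ(P₀/Q₀, P₁/Q₁) = 0 in ℂ(t): the points (a₁m, F) and (F', a₀n) are vertices of the Newton polygon N(φ); if it is not the case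 that all four conditions 0 ∉ SQ₀, 0 ∉ SQ₁, a₀n ∉ SQ₀, a₁m ∉ SQ₁ hold with δ ≠ 0, then the segment joining (a₁m, F) and (F', a₀n) is contained in the boundary of N(φ) (it is an edge of N(φ)); otherwise the point p, defined as p = (a₁m − L₁, R₀) if δ < 0 and p = (R₁, a₀n − L₀) if δ > 0, is a vertex of N(φ) and the two segments joining (a₁m, F) to p and p to (F', a₀n) are contained in the boundary of N(φ). -/

import Mathlib

open Polynomial

/-- The univariate polynomial with support `S` and coefficient vector `c`. -/
noncomputable def polyOfCoeffs (S : Finset ℕ) (c : {s // s ∈ S} → ℂ) : Polynomial ℂ :=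
  ∑ s ∈ S.attach, Polynomial.C (c s) * Polynomial.X ^ (s : ℕ)

/-- The image of that polynomial in the field of rational functions `ℂ(t)`. -/
noncomputable def ratFuncOf (S : Finset ℕ) (c : {s // s ∈ S} → ℂ) : RatFunc ℂ :=
  algebraMap (Polynomial ℂ) (RatFunc ℂ) (polyOfCoeffs S c)

/-- The Newton polygon of a bivariate polynomial: the convex hull in `ℝ²` of its support. -/
noncomputable def newtonPolygon (φ : MvPolynomial (Fin 2) ℂ) : Set (ℝ × ℝ) :=
  convexHull ℝ ((fun d : Fin 2 →₀ ℕ => ((d 0 : ℝ), (d 1 : ℝ))) '' ↑φ.support)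

/-- `φ(P₀/Q₀, P₁/Q₁) = 0` in `ℂ(t)`, where `P₀, Q₀, P₁, Q₁` have supports
`SS 0, SS 1, SS 2, SS 3` and coefficient vector `c`. -/
def vanishesDiff (SS : Fin 4 → Finset ℕ)
    (c : (Σ i : Fin 4, {s // s ∈ SS i}) → ℂ) (φ : MvPolynomial (Fin 2) ℂ) : Prop :=
  MvPolynomial.aeval
    ![ratFuncOf (SS 0) (fun s => c ⟨0, s⟩) / ratFuncOf (SS 1) (fun s => c ⟨1, s⟩),
      ratFuncOf (SS 2) (fun s => c ⟨2, s⟩) / ratFuncOf (SS 3) (fun s => c ⟨3, s⟩)] φ = 0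

/-!
Write `n`, `m` for the largest exponents of the two coordinates. The resultant of `Q₀ x - P₀` and
`Q₁ y - P₁` with respect to the parameter has degree at most `m` in `x` and at most `n` in `y`,
and it vanishes on the curve. For generic coefficients the lines `x = 1` and `y = 1` meet the curve
in `n`, respectively `m`, points with distinct remaining coordinates, so the implicit equation
already has these degrees and agrees with the resultant up to a constant.

Giving weights to the rows and columns of the Sylvester matrix bounds the exponents of the
resultant by half planes: the missing exponents of `Q₀`, `Q₁` at either end cut the corner `(m, n)`
off the rectangle `[0, m] × [0, n]`. The coefficient of the resultant at each claimed vertex is a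
polynomial in the coefficients of `P₀, Q₀, P₁, Q₁`, nonzero because one specialization does not kill
it. The rest is the convex geometry of the sum of two segments.
-/

/-! ### Weighted degrees of bivariate polynomials -/

section WeightedDegree

variable {A : Type*} [CommRing A] {w₀ w₁ H H' : ℝ} {p q : A[X][X]}

/-- The coefficient of `x ^ i * y ^ j` in a polynomial in `y` over `A[x]`. -/
noncomputable def bicoeff (p : A[X][X]) (i j : ℕ) : A := (p.coeff j).coeff i

/-- The weighted degree of `p`, for the weight `w₀` of `x` and `w₁` of `y`, is at most `H`: the
support of `p` lies in the half plane `w₀ * i + w₁ * j ≤ H`. -/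
def WeightLE (w₀ w₁ H : ℝ) (p : A[X][X]) : Prop :=
  ∀ i j : ℕ, bicoeff p i j ≠ 0 → w₀ * i + w₁ * j ≤ H

namespace WeightLE

lemma zero (w₀ w₁ H : ℝ) : WeightLE w₀ w₁ H (0 : A[X][X]) := fun i j h => by
  simp [bicoeff] at h

lemma mono (hp : WeightLE w₀ w₁ H p) (hH : H ≤ H') : WeightLE w₀ w₁ H' p :=
  fun i j hij => (hp i j hij).trans hH

lemma add (hp : WeightLE w₀ w₁ H p) (hq : WeightLE w₀ w₁ H q) : WeightLE w₀ w₁ H (p + q) := by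
  intro i j h
  by_cases hpij : bicoeff p i j = 0
  · refine hq i j fun hqij => h ?_
    simp only [bicoeff, coeff_add] at *
    rw [hpij, hqij, add_zero]
  · exact hp i j hpij

lemma neg (hp : WeightLE w₀ w₁ H p) : WeightLE w₀ w₁ H (-p) :=
  fun i j h => hp i j (by simpa [bicoeff] using h)

lemma sum {ι : Type*} {s : Finset ι} {p : ι → A[X][X]} (hp : ∀ i ∈ s, WeightLE w₀ w₁ H (p i)) :
    WeightLE w₀ w₁ H (∑ i ∈ s, p i) :=
  Finset.sum_induction p _ (fun _ _ => add) (zero _ _ _) hp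

lemma mul (hp : WeightLE w₀ w₁ H p) (hq : WeightLE w₀ w₁ H' q) :
    WeightLE w₀ w₁ (H + H') (p * q) := by
  intro i j h
  simp only [bicoeff, coeff_mul, finsetSum_coeff] at h
  obtain ⟨y, hy, h⟩ := Finset.exists_ne_zero_of_sum_ne_zero h
  obtain ⟨x, hx, h⟩ := Finset.exists_ne_zero_of_sum_ne_zero h
  have hpxy := hp x.1 y.1 (left_ne_zero_of_mul h)
  have hqxy := hq x.2 y.2 (right_ne_zero_of_mul h)
  rw [Finset.HasAntidiagonal.mem_antidiagonal] at hx hy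
  subst hx hy
  push_cast
  linarith

lemma C_C (a : A) (hH : 0 ≤ H) : WeightLE w₀ w₁ H (C (C a) : A[X][X]) := by
  intro i j h
  simp only [bicoeff, coeff_C] at h
  split_ifs at h with hj
  · rw [coeff_C] at h
    split_ifs at h with hi
    · simpa [hi, hj] using hH
    · exact absurd rfl h
  · simp at h

lemma C_X (hH : w₀ ≤ H) : WeightLE w₀ w₁ H (C X : A[X][X]) := by
  intro i j h
  simp only [bicoeff, coeff_C] at h
  split_ifs at h with hj
  · rw [coeff_X] at h
    split_ifs at h with hi
    · simpa [← hi, hj] using hH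
    · exact absurd rfl h
  · simp at h

lemma Y (hH : w₁ ≤ H) : WeightLE w₀ w₁ H (X : A[X][X]) := by
  intro i j h
  simp only [bicoeff, coeff_X] at h
  split_ifs at h with hj
  · rw [coeff_one] at h
    split_ifs at h with hi
    · simpa [hi, ← hj] using hH
    · exact absurd rfl h
  · simp at h

lemma prod {ι : Type*} (s : Finset ι) {p : ι → A[X][X]} {H : ι → ℝ}
    (hp : ∀ i ∈ s, WeightLE w₀ w₁ (H i) (p i)) :
    WeightLE w₀ w₁ (∑ i ∈ s, H i) (∏ i ∈ s, p i) := by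
  classical
  induction s using Finset.induction_on with
  | empty => simpa using C_C (1 : A) le_rfl
  | insert a s ha ih =>
    rw [Finset.sum_insert ha, Finset.prod_insert ha]
    exact (hp a (s.mem_insert_self a)).mul (ih fun i hi => hp i (Finset.mem_insert_of_mem hi))

lemma det {N : ℕ} {M : Matrix (Fin N) (Fin N) A[X][X]} {c r : Fin N → ℝ}
    (hM : ∀ i j, WeightLE w₀ w₁ (c i - r j) (M i j)) :
    WeightLE w₀ w₁ (∑ i, c i - ∑ j, r j) M.det := by
  rw [Matrix.det_apply]
  refine sum fun σ _ => ?_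
  have hσ : WeightLE w₀ w₁ (∑ i, c i - ∑ j, r j) (∏ j, M (σ j) j) := by
    rw [← Equiv.sum_comp σ c, ← Finset.sum_sub_distrib]
    exact prod _ fun j _ => hM (σ j) j
  rcases Int.units_eq_one_or (Equiv.Perm.sign σ) with h | h
  · rwa [h, one_smul]
  · rw [h, Units.neg_smul, one_smul]
    exact hσ.neg

/-- A Sylvester matrix has `m` shifted copies of `f` and `n` shifted copies of `g`; `c` is a weight
for each power of the eliminated variable, `r` and `s` are weights for these copies. -/
theorem resultant {f g : A[X][X][X]} {n m : ℕ} {c r s : ℕ → ℝ}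
    (hf : ∀ e ≤ n, ∀ i < m, WeightLE w₀ w₁ (c (e + i) - r i) (f.coeff e))
    (hg : ∀ e ≤ m, ∀ i < n, WeightLE w₀ w₁ (c (e + i) - s i) (g.coeff e)) :
    WeightLE w₀ w₁ (∑ k ∈ Finset.range (n + m), c k - ∑ i ∈ Finset.range m, r i -
      ∑ i ∈ Finset.range n, s i) (resultant f g n m) := by
  have hdet := det (M := sylvester f g n m) (w₀ := w₀) (w₁ := w₁) (c := fun k => c k)
    (r := Fin.addCases (fun j : Fin n => s j) (fun j : Fin m => r j)) fun k j => ?_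
  · refine hdet.mono (le_of_eq ?_)
    simp only [Fin.sum_univ_add, Fin.addCases_left, Fin.addCases_right, ← Fin.sum_univ_eq_sum_range]
    ring
  · induction j using Fin.addCases with
    | left j =>
      simp only [sylvester, Matrix.of_apply, Fin.addCases_left]
      split_ifs with h
      · simpa [Nat.sub_add_cancel h.1] using hg (k - j) (Nat.sub_le_iff_le_add'.2 h.2) j j.2
      · exact zero _ _ _
    | right j =>
      simp only [sylvester, Matrix.of_apply, Fin.addCases_right]
      split_ifs with h
      · simpa [Nat.sub_add_cancel h.1] using hf (k - j) (Nat.sub_le_iff_le_add'.2 h.2) j j.2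
      · exact zero _ _ _

end WeightLE

end WeightedDegree

/-! ### The implicit resultant -/

section ImplicitResultant

variable {A B B' : Type*} [CommRing A] [CommRing B] [CommRing B']

/-- The polynomial `z * q - p` over a ring `B` to which the coefficients of `p` and `q` are sent
by `φ`: its zeros are the parameters at which `p / q` takes the value `z`. -/
noncomputable def fiberPoly (φ : A →+* B) (z : B) (p q : A[X]) : B[X] :=
  C z * q.map φ - p.map φ

lemma coeff_fiberPoly (φ : A →+* B) (z : B) (p q : A[X]) (e : ℕ) :
    (fiberPoly φ z p q).coeff e = z * φ (q.coeff e) - φ (p.coeff e) := by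
  simp [fiberPoly]

lemma natDegree_fiberPoly_le (φ : A →+* B) (z : B) {p q : A[X]} {n : ℕ} (hp : p.natDegree ≤ n)
    (hq : q.natDegree ≤ n) : (fiberPoly φ z p q).natDegree ≤ n :=
  (natDegree_sub_le _ _).trans (max_le
    ((natDegree_C_mul_le _ _).trans (natDegree_map_le.trans hq)) (natDegree_map_le.trans hp))

lemma map_fiberPoly (φ : A →+* B) (ψ : B →+* B') (z : B) (p q : A[X]) :
    (fiberPoly φ z p q).map ψ = fiberPoly (ψ.comp φ) (ψ z) p q := by
  simp [fiberPoly, Polynomial.map_map]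

lemma fiberPoly_map (φ : A →+* B) (ψ : B →+* B') (z : B') (p q : A[X]) :
    fiberPoly ψ z (p.map φ) (q.map φ) = fiberPoly (ψ.comp φ) z p q := by
  simp [fiberPoly, Polynomial.map_map]

lemma eval_fiberPoly (φ : A →+* B) (z : B) (p q : A[X]) (t : B) :
    (fiberPoly φ z p q).eval t = z * q.eval₂ φ t - p.eval₂ φ t := by
  simp [fiberPoly, eval_map]

/-- The resultant with respect to `t` of `x * q₀(t) - p₀(t)` and `y * q₁(t) - p₁(t)`, taken in
degrees `n` and `m`, as a polynomial in `y` over `A[x]`. -/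
noncomputable def implicitResultant (p₀ q₀ p₁ q₁ : A[X]) (n m : ℕ) : A[X][X] :=
  resultant (fiberPoly (C.comp C) (C X) p₀ q₀) (fiberPoly (C.comp C) X p₁ q₁) n m

lemma map_implicitResultant (φ : A →+* B) (p₀ q₀ p₁ q₁ : A[X]) (n m : ℕ) :
    implicitResultant (p₀.map φ) (q₀.map φ) (p₁.map φ) (q₁.map φ) n m =
      (implicitResultant p₀ q₀ p₁ q₁ n m).map (mapRingHom φ) := by
  have hφ : (mapRingHom (mapRingHom φ)).comp (C.comp C : A →+* A[X][X]) = (C.comp C).comp φ := by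
    ext; simp
  rw [← coe_mapRingHom (mapRingHom φ), implicitResultant, implicitResultant, ← resultant_map_map,
    map_fiberPoly, map_fiberPoly, fiberPoly_map, fiberPoly_map, hφ, coe_mapRingHom, map_C, map_X,
    coe_mapRingHom, map_X]

lemma bicoeff_map (φ : A →+* B) (p : A[X][X]) (i j : ℕ) :
    bicoeff (p.map (mapRingHom φ)) i j = φ (bicoeff p i j) := by
  simp [bicoeff]

lemma bicoeff_swap (p : A[X][X]) (i j : ℕ) :
    bicoeff (Bivariate.swap (R := A) p) i j = bicoeff p j i := by
  induction p using Polynomial.induction_on' with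
  | add p q hp hq =>
    simp only [bicoeff, map_add, coeff_add] at *
    rw [hp, hq]
  | monomial k p =>
    induction p using Polynomial.induction_on' with
    | add p q hp hq =>
      simp only [bicoeff, map_add, coeff_add] at *
      rw [hp, hq]
    | monomial l a =>
      simp only [bicoeff, Bivariate.swap_monomial_monomial, coeff_monomial]
      split_ifs <;> simp [coeff_monomial, *]

lemma bicoeff_implicitResultant_swap (p₀ q₀ p₁ q₁ : A[X]) (n m i j : ℕ) :
    bicoeff (implicitResultant p₀ q₀ p₁ q₁ n m) i j =
      (-1) ^ (n * m) * bicoeff (implicitResultant p₁ q₁ p₀ q₀ m n) j i := by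
  let σ : A[X][X] →+* A[X][X] := Bivariate.swap (R := A)
  have hC : σ.comp (C.comp C) = C.comp C := RingHom.ext Bivariate.swap_C_C
  have hX : σ (C X) = X := Bivariate.swap_X
  have hY : σ X = C X := Bivariate.swap_Y
  have hswap : implicitResultant p₀ q₀ p₁ q₁ n m =
      C (C ((-1) ^ (n * m))) * σ (implicitResultant p₁ q₁ p₀ q₀ m n) := by
    rw [implicitResultant, implicitResultant, ← resultant_map_map, map_fiberPoly, map_fiberPoly,
      hC, hX, hY, resultant_comm]
    simp
  rw [hswap, bicoeff, coeff_C_mul, coeff_C_mul, ← bicoeff_swap]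
  rfl

end ImplicitResultant

/-! ### Weight bound for the implicit resultant -/

/-- A dual certificate for the assignment problem that computes the weighted degree of the Sylvester
determinant, at the end `t = 0`: bounds `c` for the powers of `t` and `r`, `s` for the shifts
of `x * q₀ - p₀` and `y * q₁ - p₁`, where `q₀`, `q₁` have order at least `L₀`, `L₁` at `t = 0`. It
lowers the trivial bound `m * w₀ + n * w₁` by `gain`. -/
structure EndCertificate (w₀ w₁ : ℝ) (L₀ L₁ n m : ℕ) (gain : ℝ) where
  c : ℕ → ℝ
  r : ℕ → ℝ
  s : ℕ → ℝ
  c_le_r_add (e i : ℕ) : c (e + i) ≤ r i + w₀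
  c_le_r {e : ℕ} (i : ℕ) (he : L₀ ≤ e) : c (e + i) ≤ r i
  c_le_s_add (e i : ℕ) : c (e + i) ≤ s i + w₁
  c_le_s {e : ℕ} (i : ℕ) (he : L₁ ≤ e) : c (e + i) ≤ s i
  sum_le : gain + ∑ i ∈ Finset.range m, r i + ∑ i ∈ Finset.range n, s i
    ≤ ∑ k ∈ Finset.range (n + m), c k

namespace EndCertificate

variable {w₀ w₁ : ℝ} {L₀ L₁ n m : ℕ} {gain : ℝ}

/-- The certificate that gains nothing. -/
def trivial (h₀ : 0 ≤ w₀) (h₁ : 0 ≤ w₁) : EndCertificate w₀ w₁ L₀ L₁ n m 0 where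
  c _ := 0
  r _ := 0
  s _ := 0
  c_le_r_add := by simpa
  c_le_r := by simp
  c_le_s_add := by simpa
  c_le_s := by simp
  sum_le := by simp

/-- Exchange of the coordinates `x` and `y`. -/
def swap (E : EndCertificate w₀ w₁ L₀ L₁ n m gain) : EndCertificate w₁ w₀ L₁ L₀ m n gain where
  c := E.c
  r := E.s
  s := E.r
  c_le_r_add := E.c_le_s_add
  c_le_r := E.c_le_s
  c_le_s_add := E.c_le_r_add
  c_le_s := E.c_le_r
  sum_le := by
    have := E.sum_le
    rw [add_comm m n]
    linarith

lemma sum_slope (h₁ : 0 ≤ w₁) {a : ℝ} (ha : 0 ≤ a) (hn : L₀ ≤ n) :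
    w₁ * L₀ + ∑ i ∈ Finset.range m, max 0 (w₁ - a * i) +
      ∑ i ∈ Finset.range n, max 0 (a * L₀ - a * i) ≤
    ∑ k ∈ Finset.range (n + m), max 0 (a * L₀ + w₁ - a * k) := by
  obtain ⟨d, rfl⟩ := Nat.exists_eq_add_of_le hn
  have hlow : ∀ k ∈ Finset.range L₀, max 0 (a * L₀ + w₁ - a * k) =
      w₁ + max 0 (a * L₀ - a * k) := fun k hk => by
    have : a * (k : ℝ) ≤ a * L₀ := by have := (Finset.mem_range.1 hk).le; gcongr
    rw [max_eq_right (by linarith), max_eq_right (by linarith)]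
    ring
  have hs : ∑ k ∈ Finset.range d, max 0 (a * L₀ - a * ((L₀ + k : ℕ) : ℝ)) = 0 :=
    Finset.sum_eq_zero fun k _ => max_eq_left (by push_cast; nlinarith [k.cast_nonneg (α := ℝ)])
  have hr : ∀ k ∈ Finset.range m, max 0 (a * L₀ + w₁ - a * ((L₀ + k : ℕ) : ℝ)) =
      max 0 (w₁ - a * k) := fun k _ => by
    push_cast
    ring_nf
  have hrest : 0 ≤ ∑ k ∈ Finset.range d, max 0 (a * L₀ + w₁ - a * ((L₀ + (m + k) : ℕ) : ℝ)) :=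
    Finset.sum_nonneg fun k _ => le_max_left _ _
  rw [show L₀ + d + m = L₀ + (m + d) by ring, Finset.sum_range_add _ L₀ d,
    Finset.sum_range_add _ L₀ (m + d), Finset.sum_range_add _ m d, Finset.sum_congr rfl hlow,
    Finset.sum_add_distrib, Finset.sum_congr rfl hr, hs, Finset.sum_const, Finset.card_range,
    nsmul_eq_mul]
  linarith [mul_comm w₁ L₀]

/-- The certificate of slope `a = w₀ / L₀`. -/
noncomputable def slope (h₁ : 0 ≤ w₁) {a : ℝ} (ha : 0 ≤ a) (hw₀ : w₀ = a * L₀)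
    (hw₁ : w₁ ≤ a * L₁) (hn : L₀ ≤ n) : EndCertificate w₀ w₁ L₀ L₁ n m (w₁ * L₀) where
  c k := max 0 (w₀ + w₁ - a * k)
  r k := max 0 (w₁ - a * k)
  s k := max 0 (w₀ - a * k)
  c_le_r_add e i := by
    have hw : 0 ≤ w₀ := by rw [hw₀]; positivity
    have : 0 ≤ a * (e : ℝ) := by positivity
    push_cast
    grind
  c_le_r {e} i he := by
    have : a * (L₀ : ℝ) ≤ a * e := by gcongr
    push_cast
    grind
  c_le_s_add e i := by
    have : 0 ≤ a * (e : ℝ) := by positivity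
    push_cast
    grind
  c_le_s {e} i he := by
    have : a * (L₁ : ℝ) ≤ a * e := by gcongr
    push_cast
    grind
  sum_le := by
    subst hw₀
    exact sum_slope h₁ ha hn

lemma nonempty_of_le (h₀ : 0 ≤ w₀) (h₁ : 0 ≤ w₁) (h : w₁ * L₀ ≤ w₀ * L₁) (hn : L₀ ≤ n) :
    Nonempty (EndCertificate w₀ w₁ L₀ L₁ n m (w₁ * L₀)) := by
  rcases L₀.eq_zero_or_pos with rfl | hL₀
  · simpa using ⟨trivial h₀ h₁⟩
  · have hL₀' : (0 : ℝ) < L₀ := by exact_mod_cast hL₀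
    refine ⟨slope h₁ (a := w₀ / L₀) (by positivity) (by field_simp) ?_ hn⟩
    rwa [div_mul_eq_mul_div, le_div_iff₀ hL₀']

theorem nonempty (h₀ : 0 ≤ w₀) (h₁ : 0 ≤ w₁) (hn : L₀ ≤ n) (hm : L₁ ≤ m) :
    Nonempty (EndCertificate w₀ w₁ L₀ L₁ n m (min (w₀ * L₁) (w₁ * L₀))) := by
  rcases le_total (w₁ * L₀) (w₀ * L₁) with h | h
  · rw [min_eq_right h]
    exact nonempty_of_le h₀ h₁ h hn
  · rw [min_eq_left h]
    exact (nonempty_of_le h₁ h₀ h hm).map swap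

end EndCertificate

section WeightBound

variable {A : Type*} [CommRing A] {w₀ w₁ H : ℝ}

lemma weightLE_coeff_fiberPoly {z : A[X][X]} {w : ℝ} (hz : WeightLE w₀ w₁ w z) (p q : A[X]) (e : ℕ)
    (hH : 0 ≤ H) (hq : q.coeff e ≠ 0 → w ≤ H) :
    WeightLE w₀ w₁ H ((fiberPoly (C.comp C) z p q).coeff e) := by
  rw [coeff_fiberPoly, sub_eq_add_neg]
  refine WeightLE.add ?_ (WeightLE.C_C _ hH).neg
  by_cases hqe : q.coeff e = 0
  · simpa [hqe] using WeightLE.zero _ _ _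
  · exact (add_zero w ▸ hz.mul (WeightLE.C_C _ le_rfl)).mono (hq hqe)

/-- One of `c₁ ≤ r₁` and `c₂ ≤ r₂` holds for each `e`, since `L + M ≤ n`. -/
lemma weightLE_coeff_fiberPoly_of_ends {z : A[X][X]} {w : ℝ} (hz : WeightLE w₀ w₁ w z)
    {p q : A[X]} {L M n e : ℕ} (hLM : L + M ≤ n)
    (hq : ∀ k, q.coeff k ≠ 0 → L ≤ k ∧ k + M ≤ n) {c₁ r₁ c₂ r₂ : ℝ} (h₁ : c₁ ≤ r₁ + w)
    (h₁' : L ≤ e → c₁ ≤ r₁) (h₂ : c₂ ≤ r₂ + w) (h₂' : e + M ≤ n → c₂ ≤ r₂) :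
    WeightLE w₀ w₁ (w - (c₁ - r₁) - (c₂ - r₂)) ((fiberPoly (C.comp C) z p q).coeff e) := by
  refine weightLE_coeff_fiberPoly hz p q e ?_ fun hqe => ?_
  · by_cases hL : L ≤ e
    · linarith [h₁' hL]
    · linarith [h₂' (by omega)]
  · obtain ⟨hL, hM⟩ := hq e hqe
    linarith [h₁' hL, h₂' hM]

theorem weightLE_implicitResultant (h₀ : 0 ≤ w₀) (h₁ : 0 ≤ w₁) {L₀ L₁ M₀ M₁ n m : ℕ}
    (p₀ p₁ : A[X]) {q₀ q₁ : A[X]} (hn : L₀ + M₀ ≤ n) (hm : L₁ + M₁ ≤ m)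
    (hq₀ : ∀ k, q₀.coeff k ≠ 0 → L₀ ≤ k ∧ k + M₀ ≤ n)
    (hq₁ : ∀ k, q₁.coeff k ≠ 0 → L₁ ≤ k ∧ k + M₁ ≤ m) :
    WeightLE w₀ w₁ (m * w₀ + n * w₁ - min (w₀ * L₁) (w₁ * L₀) - min (w₀ * M₁) (w₁ * M₀))
      (implicitResultant p₀ q₀ p₁ q₁ n m) := by
  obtain ⟨E⟩ : Nonempty (EndCertificate w₀ w₁ L₀ L₁ n m _) :=
    EndCertificate.nonempty h₀ h₁ (by omega) (by omega)
  obtain ⟨E'⟩ : Nonempty (EndCertificate w₀ w₁ M₀ M₁ n m _) :=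
    EndCertificate.nonempty h₀ h₁ (by omega) (by omega)
  -- `E'` handles the end `t = ∞`, hence the reflected indices.
  have hR := WeightLE.resultant (w₀ := w₀) (w₁ := w₁) (n := n) (m := m)
    (f := fiberPoly (C.comp C) (C X) p₀ q₀) (g := fiberPoly (C.comp C) X p₁ q₁)
    (c := fun k => w₀ + w₁ - E.c k - E'.c (n + m - 1 - k))
    (r := fun i => w₁ - E.r i - E'.r (m - 1 - i)) (s := fun i => w₀ - E.s i - E'.s (n - 1 - i))
    (fun e he i hi => ?_) (fun e he i hi => ?_)
  · refine hR.mono ?_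
    simp only [Finset.sum_sub_distrib, Finset.sum_range_reflect, Finset.sum_const,
      Finset.card_range, nsmul_eq_mul]
    push_cast
    linarith [E.sum_le, E'.sum_le]
  · have hk : n + m - 1 - (e + i) = n - e + (m - 1 - i) := by omega
    refine (weightLE_coeff_fiberPoly_of_ends (WeightLE.C_X le_rfl) hn hq₀ (E.c_le_r_add e i)
      (E.c_le_r i) (E'.c_le_r_add (n - e) (m - 1 - i))
      (fun h => E'.c_le_r _ (Nat.le_sub_of_add_le' h))).mono ?_
    rw [hk]
    linarith
  · have hk : n + m - 1 - (e + i) = m - e + (n - 1 - i) := by omega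
    refine (weightLE_coeff_fiberPoly_of_ends (WeightLE.Y le_rfl) hm hq₁ (E.c_le_s_add e i)
      (E.c_le_s i) (E'.c_le_s_add (m - e) (n - 1 - i))
      (fun h => E'.c_le_s _ (Nat.le_sub_of_add_le' h))).mono ?_
    rw [hk]
    linarith

end WeightBound

/-! ### Fiber resultants -/

section CoeffDet

variable {A : Type*} [CommRing A]

lemma coeff_prod_sum_of_natDegree_le {ι : Type*} (s : Finset ι) {f : ι → A[X]} {d : ι → ℕ}
    (h : ∀ i ∈ s, (f i).natDegree ≤ d i) :
    (∏ i ∈ s, f i).coeff (∑ i ∈ s, d i) = ∏ i ∈ s, (f i).coeff (d i) := by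
  classical
  induction s using Finset.induction_on with
  | empty => simp
  | insert a s ha ih =>
    have hs : ∀ i ∈ s, (f i).natDegree ≤ d i := fun i hi => h i (Finset.mem_insert_of_mem hi)
    rw [Finset.prod_insert ha, Finset.sum_insert ha, Finset.prod_insert ha,
      coeff_mul_add_eq_of_natDegree_le (h a (s.mem_insert_self a))
        ((natDegree_prod_le s f).trans (Finset.sum_le_sum hs)), ih hs]

variable {N : ℕ} {M : Matrix (Fin N) (Fin N) A[X]} {d : Fin N → ℕ}

lemma natDegree_det_le_sum (h : ∀ i j, (M i j).natDegree ≤ d j) :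
    M.det.natDegree ≤ ∑ j, d j := by
  rw [Matrix.det_apply]
  refine natDegree_sum_le_of_forall_le _ _ fun σ _ => (natDegree_smul_le _ _).trans ?_
  exact (natDegree_prod_le _ _).trans (Finset.sum_le_sum fun j _ => h (σ j) j)

lemma coeff_det_sum_of_natDegree_le (h : ∀ i j, (M i j).natDegree ≤ d j) :
    M.det.coeff (∑ j, d j) = (Matrix.of fun i j => (M i j).coeff (d j)).det := by
  rw [Matrix.det_apply, Matrix.det_apply, finsetSum_coeff]
  refine Finset.sum_congr rfl fun σ _ => ?_
  rw [coeff_smul, coeff_prod_sum_of_natDegree_le _ fun j _ => h (σ j) j]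
  rfl

end CoeffDet

section FiberResultant

variable {A B : Type*} [CommRing A] [CommRing B]

/-- The resultant of `f(t)` and `x * q(t) - p(t)` in degrees `n` and `m`, a polynomial in `x` whose
roots are the values of `p / q` at the roots of `f`. -/
noncomputable def fiberResultant (f p q : A[X]) (n m : ℕ) : A[X] :=
  resultant (f.map C) (fiberPoly C X p q) n m

lemma map_fiberResultant (φ : A →+* B) (f p q : A[X]) (n m : ℕ) :
    fiberResultant (f.map φ) (p.map φ) (q.map φ) n m = (fiberResultant f p q n m).map φ := by
  have hφ : (mapRingHom φ).comp (C : A →+* A[X]) = C.comp φ := by ext; simp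
  rw [← coe_mapRingHom φ, fiberResultant, fiberResultant, ← resultant_map_map, map_fiberPoly,
    Polynomial.map_map, hφ, coe_mapRingHom, map_X, fiberPoly_map, Polynomial.map_map]

lemma natDegree_sylvester_fiber_le (f p q : A[X]) (n m : ℕ) (i j : Fin (n + m)) :
    (sylvester (f.map C) (fiberPoly C X p q) n m i j).natDegree ≤
      Fin.addCases (fun _ => 1) (fun _ => 0) j := by
  induction j using Fin.addCases with
  | left j =>
    simp only [sylvester, Matrix.of_apply, Fin.addCases_left, coeff_fiberPoly]
    split_ifs
    · compute_degree
    · simp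
  | right j =>
    simp only [sylvester, Matrix.of_apply, Fin.addCases_right, coeff_map]
    split_ifs <;> simp

lemma sum_addCases_one_zero (n m : ℕ) :
    ∑ j : Fin (n + m), (Fin.addCases (fun _ => 1) (fun _ => 0) j : ℕ) = n := by
  simp [Fin.sum_univ_add]

lemma natDegree_fiberResultant_le (f p q : A[X]) (n m : ℕ) :
    (fiberResultant f p q n m).natDegree ≤ n :=
  (natDegree_det_le_sum (natDegree_sylvester_fiber_le f p q n m)).trans_eq
    (sum_addCases_one_zero n m)

lemma coeff_fiberResultant (f p q : A[X]) (n m : ℕ) :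
    (fiberResultant f p q n m).coeff n = resultant f q n m := by
  have h := coeff_det_sum_of_natDegree_le (natDegree_sylvester_fiber_le f p q n m)
  rw [sum_addCases_one_zero] at h
  rw [fiberResultant, resultant, h, resultant]
  congr 1
  ext i j
  induction j using Fin.addCases with
  | left j =>
    simp only [sylvester, Matrix.of_apply, Fin.addCases_left, coeff_fiberPoly]
    split_ifs <;> simp [coeff_C]
  | right j =>
    simp only [sylvester, Matrix.of_apply, Fin.addCases_right, coeff_map]
    split_ifs <;> simp

lemma fiberResultant_X_pow_mul [Nontrivial A] (u : A[X]) {p q : A[X]} {m : ℕ}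
    (hp : p.natDegree ≤ m) (hq : q.natDegree ≤ m) (L M : ℕ) :
    fiberResultant (X ^ L * u) p q (L + u.natDegree + M) m =
      (-1) ^ (m * M) * (fiberPoly C X p q).coeff m ^ M * ((fiberPoly C X p q).coeff 0 ^ L *
        fiberResultant u p q u.natDegree m) := by
  have hg : (fiberPoly C X p q).natDegree ≤ m := natDegree_fiberPoly_le C X hp hq
  have hu : (u.map (C : A →+* A[X])).natDegree = u.natDegree :=
    natDegree_map_eq_of_injective C_injective u
  have hmul := resultant_mul_left (X ^ L : A[X][X]) (u.map C) _ m hg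
  rw [hu, natDegree_X_pow, resultant_X_pow_left _ _ _ hg] at hmul
  rw [fiberResultant, Polynomial.map_mul, Polynomial.map_pow, map_X, resultant_add_left_deg, hmul,
    fiberResultant]
  exact natDegree_mul_le.trans (by rw [natDegree_X_pow, hu])

lemma natDegree_fiberResultant_X_pow [IsDomain A] {u : A[X]} (hu : u.coeff 0 ≠ 0) (p : A[X])
    {r m : ℕ} (hr : r ≤ m) :
    fiberResultant u p (X ^ r) u.natDegree m ≠ 0 ∧
      (fiberResultant u p (X ^ r) u.natDegree m).natDegree = u.natDegree := by
  have hcoeff : (fiberResultant u p (X ^ r) u.natDegree m).coeff u.natDegree ≠ 0 := by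
    obtain ⟨k, rfl⟩ := Nat.exists_eq_add_of_le hr
    rw [coeff_fiberResultant, resultant_add_right_deg _ _ _ _ _ (natDegree_X_pow_le r),
      resultant_X_pow_right _ _ _ le_rfl]
    have hlead : u.coeff u.natDegree ≠ 0 :=
      leadingCoeff_ne_zero.2 fun h => hu (by rw [h, coeff_zero])
    exact mul_ne_zero (pow_ne_zero _ hlead)
      (mul_ne_zero (pow_ne_zero _ (by simp)) (pow_ne_zero _ hu))
  exact ⟨fun h => hcoeff (by rw [h, coeff_zero]),
    (natDegree_fiberResultant_le _ _ _ _ _).antisymm (le_natDegree_of_ne_zero hcoeff)⟩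

end FiberResultant

/-! ### Corner coefficients of two special resultants -/

section CornerCoefficients

variable {A : Type*} [CommRing A]

lemma implicitResultant_zero_left (p₀ q₀ q₁ : A[X]) (n m : ℕ) :
    implicitResultant p₀ q₀ 0 q₁ n m =
      X ^ n * C ((-1) ^ (n * m) * fiberResultant q₁ p₀ q₀ m n) := by
  have h₀ : fiberPoly (C.comp C) (C X) p₀ q₀ = (fiberPoly C X p₀ q₀).map (C : A[X] →+* A[X][X]) :=
    (map_fiberPoly C C X p₀ q₀).symm
  have h₁ : fiberPoly (C.comp C) X 0 q₁ = C (X : A[X][X]) * (q₁.map (C : A →+* A[X])).map C := by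
    rw [fiberPoly, Polynomial.map_zero, sub_zero, Polynomial.map_map]
  rw [implicitResultant, h₀, h₁, resultant_C_mul_right, resultant_map_map, resultant_comm,
    fiberResultant]

lemma coeff_fiberPoly_X_pow_ne_zero [IsDomain A] {p : A[X]} {r k : ℕ} (h : k = r ∨ p.coeff k ≠ 0) :
    (fiberPoly C X p (X ^ r)).coeff k ≠ 0 ∧
      ((fiberPoly C X p (X ^ r)).coeff k).natDegree = if k = r then 1 else 0 := by
  rw [coeff_fiberPoly, coeff_X_pow]
  split_ifs with hk
  · rw [C_1, mul_one]
    exact ⟨X_sub_C_ne_zero _, natDegree_X_sub_C _⟩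
  · have hp := h.resolve_left hk
    simpa using hp

theorem bicoeff_implicitResultant_X_pow_ne_zero [IsDomain A] {p u : A[X]} {n r : ℕ} (L M : ℕ)
    (hp : p.natDegree ≤ n) (hr : r ≤ n) (hu : u.coeff 0 ≠ 0) (h0 : 0 = r ∨ p.coeff 0 ≠ 0)
    (hn : n = r ∨ p.coeff n ≠ 0) :
    bicoeff (implicitResultant p (X ^ r) 0 (X ^ L * u) n (L + u.natDegree + M))
      (u.natDegree + (if 0 = r then L else 0) + if n = r then M else 0) n ≠ 0 := by
  obtain ⟨hbot, hbot'⟩ := coeff_fiberPoly_X_pow_ne_zero h0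
  obtain ⟨htop, htop'⟩ := coeff_fiberPoly_X_pow_ne_zero hn
  obtain ⟨hmid, hmid'⟩ := natDegree_fiberResultant_X_pow hu p hr
  set T := (fiberPoly C X p (X ^ r)).coeff n ^ M *
    ((fiberPoly C X p (X ^ r)).coeff 0 ^ L * fiberResultant u p (X ^ r) u.natDegree n) with hT
  have hT0 : T ≠ 0 := mul_ne_zero (pow_ne_zero _ htop) (mul_ne_zero (pow_ne_zero _ hbot) hmid)
  have hTdeg : T.natDegree =
      u.natDegree + (if 0 = r then L else 0) + if n = r then M else 0 := by
    rw [hT, natDegree_mul (pow_ne_zero _ htop) (mul_ne_zero (pow_ne_zero _ hbot) hmid),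
      natDegree_mul (pow_ne_zero _ hbot) hmid, natDegree_pow, natDegree_pow, htop', hbot', hmid']
    split_ifs <;> ring
  have hres : ∀ N, (-1) ^ N * fiberResultant (X ^ L * u) p (X ^ r) (L + u.natDegree + M) n =
      C ((-1) ^ N * (-1) ^ (n * M)) * T := fun N => by
    rw [fiberResultant_X_pow_mul u hp ((natDegree_X_pow_le r).trans hr), hT]
    simp only [map_mul, map_pow, map_neg, map_one]
    ring
  rw [bicoeff, implicitResultant_zero_left, coeff_mul_C, coeff_X_pow_self, one_mul, hres,
    coeff_C_mul, ← hTdeg]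
  exact mul_ne_zero (by simp) (leadingCoeff_ne_zero.2 hT0)

lemma implicitResultant_eq_fiberResultant (L e r n m : ℕ) (hn : L + e = n) :
    implicitResultant (-X ^ n : A[X]) (X ^ L) (-1) (X ^ r) n m =
      fiberResultant (X ^ L * (X ^ e + C X) : A[X][X]) (-1) (X ^ r) n m := by
  rw [implicitResultant, fiberResultant]
  refine congrArg₂ (resultant · · n m) ?_ ?_
  · simp only [fiberPoly, Polynomial.map_neg, Polynomial.map_pow, map_X, Polynomial.map_mul,
      Polynomial.map_add, map_C, ← hn, pow_add]
    ring
  · simp [fiberPoly]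

theorem bicoeff_implicitResultant_monomials_ne_zero [Nontrivial A] {L e r : ℕ} (M : ℕ) (he : e ≠ 0)
    (hr : r ≠ 0) :
    bicoeff (implicitResultant (-X ^ (L + e) : A[X]) (X ^ L) (-1) (X ^ r) (L + e) (r + M)) r e ≠
      0 := by
  have hdeg : (X ^ e + C X : A[X][X]).natDegree = e := natDegree_X_pow_add_C
  have hcoeff0 : (fiberPoly C X (-1) (X ^ r : A[X][X])).coeff 0 = 1 := by
    simp [coeff_fiberPoly, coeff_X_pow, hr.symm]
  have hsplit := fiberResultant_X_pow_mul (X ^ e + C X : A[X][X]) (p := -1) (q := X ^ r)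
    (m := r + M) (by simp) ((natDegree_X_pow_le r).trans (by omega)) L 0
  rw [hdeg, hcoeff0, add_zero, mul_zero, pow_zero, pow_zero, one_mul, one_pow, one_mul,
    one_mul] at hsplit
  rw [implicitResultant_eq_fiberResultant _ _ _ _ _ rfl, hsplit, bicoeff, coeff_fiberResultant,
    resultant_add_right_deg _ _ _ _ _ (natDegree_X_pow_le r),
    resultant_X_pow_right _ _ _ hdeg.le]
  have hlead : (X ^ e + C X : A[X][X]).coeff e = 1 := by simp [coeff_X_pow, coeff_C, he]
  have hconst : (X ^ e + C X : A[X][X]).coeff 0 = X := by simp [coeff_X_pow, he.symm]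
  have hsign : (-1 : A[X]) ^ (e * r) = C ((-1) ^ (e * r)) := by simp
  rw [hlead, hconst, one_pow, one_mul, hsign, coeff_C_mul, coeff_X_pow_self, mul_one]
  exact (isUnit_neg_one.pow _).ne_zero

end CornerCoefficients

/-! ### Generic coefficients -/

section Generic

variable {K L : Type*} [Field K] [CommRing L] [Algebra K L] {σ τ : Type*}

/-- `p` holds for generic coefficient vectors: off the zero set of some nonzero polynomial. -/
def Generically (p : (σ → K) → Prop) : Prop :=
  ∃ G : MvPolynomial σ K, G ≠ 0 ∧ ∀ c : σ → K, MvPolynomial.eval c G ≠ 0 → p c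

namespace Generically

variable {p q : (σ → K) → Prop}

lemma and (hp : Generically p) (hq : Generically q) : Generically fun c => p c ∧ q c := by
  obtain ⟨G, hG, hGp⟩ := hp
  obtain ⟨H, hH, hHq⟩ := hq
  refine ⟨G * H, mul_ne_zero hG hH, fun c hc => ?_⟩
  rw [map_mul] at hc
  exact ⟨hGp c (left_ne_zero_of_mul hc), hHq c (right_ne_zero_of_mul hc)⟩

lemma mono (hp : Generically p) (h : ∀ c, p c → q c) : Generically q := by
  obtain ⟨G, hG, hGp⟩ := hp
  exact ⟨G, hG, fun c hc => h c (hGp c hc)⟩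

lemma of_imp {P : Prop} (h : P → Generically p) : Generically fun c => P → p c := by
  by_cases hP : P
  · exact (h hP).mono fun c hc _ => hc
  · exact ⟨1, one_ne_zero, fun c _ hP' => absurd hP' hP⟩

lemma ball {ι : Type*} (s : Finset ι) {p : ι → (σ → K) → Prop} (hp : ∀ i ∈ s, Generically (p i)) :
    Generically fun c => ∀ i ∈ s, p i c := by
  choose! G hG hGp using hp
  refine ⟨∏ i ∈ s, G i, Finset.prod_ne_zero_iff.2 hG, fun c hc i hi => hGp i hi c ?_⟩
  rw [map_prod] at hc
  exact Finset.prod_ne_zero_iff.1 hc i hi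

lemma exists_point [Infinite K] (hp : Generically p) : ∃ c, p c := by
  obtain ⟨G, hG, hGp⟩ := hp
  by_contra! hnot
  exact hG (MvPolynomial.funext fun c => by
    rw [map_zero]
    exact of_not_not fun hc => hnot c (hGp c hc))

lemma comp_injective {p : (τ → K) → Prop} (hp : Generically p) {e : τ → σ}
    (he : Function.Injective e) : Generically fun c : σ → K => p (c ∘ e) := by
  obtain ⟨G, hG, hGp⟩ := hp
  refine ⟨MvPolynomial.rename e G,
    (map_ne_zero_iff _ (MvPolynomial.rename_injective e he)).2 hG, fun c hc => hGp _ ?_⟩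
  rwa [MvPolynomial.eval_rename] at hc

lemma eval_ne_zero {G : MvPolynomial σ K} {c : σ → L} (h : MvPolynomial.aeval c G ≠ 0) :
    Generically fun c : σ → K => MvPolynomial.eval c G ≠ 0 :=
  ⟨G, fun hG => h (by rw [hG, map_zero]), fun _ hc => hc⟩

end Generically

end Generic

section CoeffPoly

universe u

variable {ι : Type*} {A B : Type*} [CommRing A] [CommRing B]

/-- The coefficients of a family of polynomials with prescribed supports. -/
abbrev CoeffIndex (SS : ι → Finset ℕ) : Type _ := Σ i, {s // s ∈ SS i}

/-- The `i`-th polynomial of the family with supports `SS` and coefficients `c`; for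
`c = MvPolynomial.X` it is the universal one. -/
noncomputable def coeffPoly (SS : ι → Finset ℕ) (c : CoeffIndex SS → A) (i : ι) : A[X] :=
  ∑ s ∈ (SS i).attach, C (c ⟨i, s⟩) * X ^ (s : ℕ)

lemma map_coeffPoly (SS : ι → Finset ℕ) (φ : A →+* B) (c : CoeffIndex SS → A) (i : ι) :
    (coeffPoly SS c i).map φ = coeffPoly SS (φ ∘ c) i := by
  simp [coeffPoly, Polynomial.map_sum]

variable {SS : ι → Finset ℕ} {c : CoeffIndex SS → A} {i : ι}

lemma mem_of_coeff_coeffPoly_ne_zero {k : ℕ} (h : (coeffPoly SS c i).coeff k ≠ 0) : k ∈ SS i := by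
  rw [coeffPoly, finsetSum_coeff] at h
  obtain ⟨s, -, hs⟩ := Finset.exists_ne_zero_of_sum_ne_zero h
  rw [coeff_C_mul_X_pow] at hs
  have hks : k = s := of_not_not fun hks => hs (if_neg hks)
  exact hks ▸ s.2

lemma support_coeffPoly_subset : (coeffPoly SS c i).support ⊆ SS i := fun _ hk =>
  mem_of_coeff_coeffPoly_ne_zero (mem_support_iff.1 hk)

lemma natDegree_coeffPoly_le {n : ℕ} (h : ∀ s ∈ SS i, s ≤ n) : (coeffPoly SS c i).natDegree ≤ n :=
  natDegree_le_iff_coeff_eq_zero.2 fun _ hk => of_not_not fun hne =>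
    hk.not_ge (h _ (mem_of_coeff_coeffPoly_ne_zero hne))

lemma coeffPoly_coeff {P : ι → A[X]} {i : ι} (hP : (P i).support ⊆ SS i) :
    coeffPoly SS (fun x : CoeffIndex SS => (P x.1).coeff x.2) i = P i := by
  rw [coeffPoly, Finset.sum_attach (SS i) fun s => C ((P i).coeff s) * X ^ s,
    ← Finset.sum_subset hP fun s _ hs => by rw [notMem_support_iff.1 hs, C_0, zero_mul]]
  exact (P i).as_sum_support_C_mul_X_pow.symm

lemma map_aeval_coeffPoly_X {K L : Type*} [Field K] [CommRing L] [Algebra K L]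
    (c : CoeffIndex SS → L) (i : ι) :
    (coeffPoly SS (MvPolynomial.X (R := K)) i).map (MvPolynomial.aeval (R := K) c) =
      coeffPoly SS c i := by
  rw [map_coeffPoly]
  congr 1
  ext x
  simp

lemma map_aeval_coeff_coeffPoly_X {K L : Type*} [Field K] [CommRing L] [Algebra K L] {P : ι → L[X]}
    (hP : ∀ i, (P i).support ⊆ SS i) (i : ι) :
    (coeffPoly SS (MvPolynomial.X (R := K)) i).map
      (MvPolynomial.aeval (R := K) fun x : CoeffIndex SS => (P x.1).coeff x.2) = P i := by
  rw [map_aeval_coeffPoly_X, coeffPoly_coeff (hP i)]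

/-- Nonvanishing of a function `N` of the coefficients that commutes with algebra homomorphisms can
be checked at one family of polynomials with the prescribed supports, over any extension. -/
lemma Generically.of_natural {K L : Type u} [Field K] [CommRing L] [Algebra K L] {ι : Type}
    {SS : ι → Finset ℕ} (N : ∀ (A : Type u) [CommRing A] [Algebra K A], (ι → A[X]) → A)
    (hN : ∀ {A B : Type u} [CommRing A] [CommRing B] [Algebra K A] [Algebra K B] (φ : A →ₐ[K] B)
      (P : ι → A[X]), N B (fun i => (P i).map (φ : A →+* B)) = φ (N A P))
    {P : ι → L[X]} (hP : ∀ i, (P i).support ⊆ SS i) (h : N L P ≠ 0) :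
    Generically fun c : CoeffIndex SS → K => N K (coeffPoly SS c) ≠ 0 := by
  have hwitness := hN (MvPolynomial.aeval (R := K) fun x : CoeffIndex SS => (P x.1).coeff x.2)
    (coeffPoly SS MvPolynomial.X)
  simp only [map_aeval_coeff_coeffPoly_X hP] at hwitness
  refine (Generically.eval_ne_zero (hwitness ▸ h)).mono fun c hc => ?_
  rw [← MvPolynomial.coe_aeval_eq_eval, RingHom.coe_coe, ← hN] at hc
  simpa only [map_aeval_coeffPoly_X] using hc

/-- The sum of the monomials with exponents in `S`. -/
noncomputable def monomialSum (A : Type*) [CommRing A] (S : Finset ℕ) : A[X] := ∑ s ∈ S, X ^ s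

lemma coeff_monomialSum (S : Finset ℕ) (k : ℕ) :
    (monomialSum A S).coeff k = if k ∈ S then 1 else 0 := by
  simp [monomialSum, finsetSum_coeff, coeff_X_pow]

lemma support_monomialSum_subset (S : Finset ℕ) : (monomialSum A S).support ⊆ S := fun k hk =>
  of_not_not fun hkS => mem_support_iff.1 hk (by rw [coeff_monomialSum, if_neg hkS])

lemma support_X_pow_subset_of_mem {S : Finset ℕ} {r : ℕ} (hr : r ∈ S) :
    (X ^ r : A[X]).support ⊆ S :=
  (X_pow_eq_monomial (R := A) r ▸ support_monomial_subset r 1).trans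
    (Finset.singleton_subset_iff.2 hr)

end CoeffPoly

section Resultant

lemma resultant_ne_zero_iff_isCoprime {K : Type*} [Field K] {f g : K[X]} {n m : ℕ}
    (hf : f.natDegree = n) (hf0 : f ≠ 0) (hg : g.natDegree ≤ m) :
    resultant f g n m ≠ 0 ↔ IsCoprime f g := by
  subst hf
  obtain ⟨k, rfl⟩ := Nat.exists_eq_add_of_le hg
  rw [resultant_add_right_deg _ _ _ _ _ le_rfl, mul_ne_zero_iff, coeff_natDegree,
    and_iff_right (pow_ne_zero k (leadingCoeff_ne_zero.2 hf0)), Ne, resultant_eq_zero_iff]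
  simp [hf0]

lemma isCoprime_of_resultant_ne_zero {K : Type*} [Field K] {f g : K[X]} {n m : ℕ}
    (hf : f.natDegree ≤ n) (hg : g.natDegree ≤ m) (hn : n ≠ 0) (h : resultant f g n m ≠ 0) :
    IsCoprime f g := by
  obtain ⟨a, b, -, -, hab⟩ := exists_mul_add_mul_eq_C_resultant f g hf hg (Or.inl hn)
  refine ⟨C (resultant f g n m)⁻¹ * a, C (resultant f g n m)⁻¹ * b, ?_⟩
  rw [mul_assoc, mul_assoc, ← mul_add, mul_comm a, mul_comm b, hab, ← C_mul, inv_mul_cancel₀ h, C_1]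

lemma resultant_eq_zero_iff_exists_root {K : Type*} [Field K] [IsAlgClosed K] {f g : K[X]}
    {n m : ℕ} (hf : f.natDegree = n) (hf0 : f ≠ 0) (hg : g.natDegree ≤ m) :
    resultant f g n m = 0 ↔ ∃ a, f.eval a = 0 ∧ g.eval a = 0 := by
  rw [← not_iff_not, ← ne_eq, resultant_ne_zero_iff_isCoprime hf hf0 hg,
    isCoprime_iff_aeval_ne_zero_of_isAlgClosed K K]
  simp [or_iff_not_imp_left]

end Resultant

section FiberCertificate

variable {A B : Type*} [CommRing A] [CommRing B]

/-- If this does not vanish, the values of `p / q` at the roots of `f` are `n` distinct numbers. -/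
noncomputable def fiberCertificate (f p q : A[X]) (n m : ℕ) : A :=
  f.coeff n * (fiberResultant f p q n m).coeff n *
    resultant (fiberResultant f p q n m) (derivative (fiberResultant f p q n m)) n (n - 1)

lemma map_fiberCertificate (φ : A →+* B) (f p q : A[X]) (n m : ℕ) :
    fiberCertificate (f.map φ) (p.map φ) (q.map φ) n m = φ (fiberCertificate f p q n m) := by
  rw [fiberCertificate, map_fiberResultant, derivative_map, resultant_map_map, coeff_map, coeff_map,
    fiberCertificate, map_mul, map_mul]

lemma eval_fiberResultant (f p q : A[X]) (n m : ℕ) (y : A) :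
    (fiberResultant f p q n m).eval y = resultant f (fiberPoly (RingHom.id A) y p q) n m := by
  have hC : (evalRingHom y).comp C = RingHom.id A := by ext; simp
  rw [← coe_evalRingHom, fiberResultant, ← resultant_map_map, Polynomial.map_map, hC, map_fiberPoly,
    hC, coe_evalRingHom, eval_X, Polynomial.map_id]

variable {L : Type*} [Field L] [IsAlgClosed L] {f p q : L[X]} {n m : ℕ}

lemma eval_fiberResultant_eq_zero_iff (hf : f.natDegree = n) (hf0 : f ≠ 0) (hp : p.natDegree ≤ m)
    (hq : q.natDegree ≤ m) (y : L) :
    (fiberResultant f p q n m).eval y = 0 ↔ ∃ a, f.eval a = 0 ∧ p.eval a = y * q.eval a := by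
  rw [eval_fiberResultant,
    resultant_eq_zero_iff_exists_root hf hf0 (natDegree_fiberPoly_le _ _ hp hq)]
  simp [fiberPoly, sub_eq_zero, eq_comm (b := p.eval _)]

lemma resultant_derivative_ne_zero_iff {h : L[X]} (hh : h.natDegree = n) (hh0 : h ≠ 0) :
    resultant h (derivative h) n (n - 1) ≠ 0 ↔ h.roots.Nodup := by
  rw [resultant_ne_zero_iff_isCoprime hh hh0 (hh ▸ natDegree_derivative_le h),
    nodup_roots_iff_of_splits hh0 (IsAlgClosed.splits h), Separable]

theorem exists_values_of_fiberCertificate_ne_zero (hf : f.natDegree ≤ n) (hp : p.natDegree ≤ m)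
    (hq : q.natDegree ≤ m) (h : fiberCertificate f p q n m ≠ 0) :
    ∃ T : Finset L, T.card = n ∧
      ∀ y ∈ T, ∃ a, f.eval a = 0 ∧ q.eval a ≠ 0 ∧ p.eval a = y * q.eval a := by
  obtain ⟨⟨hfn, hcoeff⟩, hdisc⟩ := by simpa only [fiberCertificate, mul_ne_zero_iff] using h
  have hf0 : f ≠ 0 := fun h0 => hfn (by rw [h0, coeff_zero])
  have hdeg := hf.antisymm (le_natDegree_of_ne_zero hfn)
  set g := fiberResultant f p q n m
  have hg0 : g ≠ 0 := fun h0 => hcoeff (by rw [h0, coeff_zero])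
  have hgdeg : g.natDegree = n :=
    (natDegree_fiberResultant_le f p q n m).antisymm (le_natDegree_of_ne_zero hcoeff)
  have hnodup := (resultant_derivative_ne_zero_iff hgdeg hg0).1 hdisc
  refine ⟨⟨g.roots, hnodup⟩, IsAlgClosed.card_roots_eq_natDegree.trans hgdeg, fun y hy => ?_⟩
  rw [Finset.mem_mk, mem_roots hg0, IsRoot, eval_fiberResultant_eq_zero_iff hdeg hf0 hp hq] at hy
  obtain ⟨a, hfa, hpa⟩ := hy
  refine ⟨a, hfa, fun hqa => hcoeff ?_, hpa⟩
  rw [coeff_fiberResultant]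
  exact (resultant_eq_zero_iff_exists_root hdeg hf0 hq).2 ⟨a, hfa, hqa⟩

theorem fiberCertificate_ne_zero (hf : f.natDegree = n) (hf0 : f ≠ 0) (hp : p.natDegree ≤ m)
    (hq : q.natDegree ≤ m) (hroots : f.roots.Nodup) (hq0 : ∀ a ∈ f.roots, q.eval a ≠ 0)
    (hinj : ∀ a ∈ f.roots, ∀ b ∈ f.roots, p.eval a / q.eval a = p.eval b / q.eval b → a = b) :
    fiberCertificate f p q n m ≠ 0 := by
  have hcoeff : (fiberResultant f p q n m).coeff n ≠ 0 := by
    rw [coeff_fiberResultant, Ne, resultant_eq_zero_iff_exists_root hf hf0 hq]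
    exact fun ⟨a, hfa, hqa⟩ => hq0 a ((mem_roots hf0).2 hfa) hqa
  have hfn : f.coeff n ≠ 0 := by rwa [← hf, coeff_natDegree, leadingCoeff_ne_zero]
  have hg0 : fiberResultant f p q n m ≠ 0 := fun h0 => hcoeff (by rw [h0, coeff_zero])
  have hgdeg : (fiberResultant f p q n m).natDegree = n :=
    (natDegree_fiberResultant_le f p q n m).antisymm (le_natDegree_of_ne_zero hcoeff)
  refine mul_ne_zero (mul_ne_zero hfn hcoeff) ((resultant_derivative_ne_zero_iff hgdeg hg0).2 ?_)
  have hvalues : (f.roots.map fun a => p.eval a / q.eval a).Nodup := hroots.map_on hinj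
  have hle : f.roots.map (fun a => p.eval a / q.eval a) ≤ (fiberResultant f p q n m).roots := by
    refine (Multiset.le_iff_subset hvalues).2 fun y hy => ?_
    obtain ⟨a, ha, rfl⟩ := Multiset.mem_map.1 hy
    rw [mem_roots hg0, IsRoot, eval_fiberResultant_eq_zero_iff hf hf0 hp hq]
    exact ⟨a, (mem_roots hf0).1 ha, (div_mul_cancel₀ _ (hq0 a ha)).symm⟩
  refine Multiset.eq_of_le_of_card_le hle ?_ ▸ hvalues
  rw [Multiset.card_map, IsAlgClosed.card_roots_eq_natDegree, IsAlgClosed.card_roots_eq_natDegree,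
    hf, hgdeg]

end FiberCertificate

section FiberWitness

variable {L : Type*} [Field L]

lemma finite_eval_image_roots (B : L[X]) {r : L[X]} (hr : r ≠ 0) :
    ((B.eval ·) '' {a | r.IsRoot a}).Finite :=
  (finite_setOfPred_isRoot hr).image _

lemma nodup_roots_sub_C [IsAlgClosed L] {B : L[X]} {z : L}
    (h : ∀ a, (derivative B).eval a = 0 → B.eval a ≠ z) :
    (B - C z).roots.Nodup := by
  refine nodup_roots ((isCoprime_iff_aeval_ne_zero_of_isAlgClosed L L _ _).2 fun a => ?_)
  rw [or_iff_not_imp_right, not_not]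
  simpa [sub_ne_zero] using h a

lemma exists_generic_level [IsAlgClosed L] {B : L[X]} (hB : derivative B ≠ 0)
    {Z : Set L} (hZ : Z.Finite)
    (hBZ : ∀ ζ ∈ Z, B.comp (C ζ * X) ≠ B) :
    ∃ z, B.eval 0 ≠ z ∧ (B - C z).roots.Nodup ∧
      ∀ a, B.eval a = z → ∀ ζ ∈ Z, B.eval (ζ * a) ≠ z := by
  have hbad : ({B.eval 0} ∪ (B.eval ·) '' {a | (derivative B).IsRoot a} ∪
      ⋃ ζ ∈ Z, (B.eval ·) '' {a | (B.comp (C ζ * X) - B).IsRoot a}).Finite :=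
    ((Set.finite_singleton _).union (finite_eval_image_roots B hB)).union
      (hZ.biUnion fun ζ hζ => finite_eval_image_roots B (sub_ne_zero.2 (hBZ ζ hζ)))
  obtain ⟨z, hz⟩ := hbad.exists_notMem
  simp only [Set.mem_union, Set.mem_singleton_iff, Set.mem_iUnion, not_or, not_exists] at hz
  obtain ⟨⟨hz0, hcrit⟩, hrot⟩ := hz
  refine ⟨z, Ne.symm hz0, nodup_roots_sub_C fun a ha haz => hcrit ⟨a, ha, haz⟩, ?_⟩
  exact fun a haz ζ hζ hζa => hrot ζ hζ ⟨a, by simp [hζa, haz], haz⟩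

lemma finite_setOf_pow_eq_one {S : Finset ℕ} {m : ℕ} (hm : m ∈ S) (hm0 : m ≠ 0) :
    {ζ : L | ζ ≠ 1 ∧ ∀ s ∈ S, ζ ^ s = 1}.Finite := by
  refine (finite_setOfPred_isRoot (X_pow_sub_C_ne_zero (Nat.pos_of_ne_zero hm0) (1 : L))).subset ?_
  exact fun ζ hζ => by simp [hζ.2 m hm]

lemma comp_monomialSum_ne {S S' : Finset ℕ}
    (hgcd : ∀ d, (∀ s ∈ S, d ∣ s) → (∀ s ∈ S', d ∣ s) → d = 1) {ζ : L}
    (hζ : ζ ≠ 1 ∧ ∀ s ∈ S', ζ ^ s = 1) : (monomialSum L S).comp (C ζ * X) ≠ monomialSum L S := by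
  intro h
  refine hζ.1 (orderOf_eq_one_iff.1 (hgcd _ (fun s hs => orderOf_dvd_of_pow_eq_one ?_)
    fun s hs => orderOf_dvd_of_pow_eq_one (hζ.2 s hs)))
  simpa [comp_C_mul_X_coeff, coeff_monomialSum, hs] using congrArg (coeff · s) h

theorem exists_separated_roots [IsAlgClosed L] [CharZero L] {S S' : Finset ℕ} {n m : ℕ}
    (hn : n ≠ 0) (hnS : n ∈ S)
    (hmax : ∀ s ∈ S, s ≤ n) (h0 : 0 ∈ S) (hm : m ≠ 0) (hmS : m ∈ S')
    (hgcd : ∀ d, (∀ s ∈ S, d ∣ s) → (∀ s ∈ S', d ∣ s) → d = 1) :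
    ∃ f : L[X], f.support ⊆ S ∧ f.natDegree = n ∧ f.roots.Nodup ∧ (∀ a ∈ f.roots, a ≠ 0) ∧
      ∀ a ∈ f.roots, ∀ b ∈ f.roots, a ≠ b → ∃ s ∈ S', (a / b) ^ s ≠ 1 := by
  set B := monomialSum L S
  have hdeg : B.natDegree = n := by
    refine natDegree_eq_of_le_of_coeff_ne_zero ?_ (by simp [B, coeff_monomialSum, hnS])
    exact natDegree_le_iff_coeff_eq_zero.2 fun k hk => by
      rw [coeff_monomialSum, if_neg fun hkS => hk.not_ge (hmax k hkS)]
  have hB : derivative B ≠ 0 := fun h => hn (hdeg ▸ derivative_eq_zero.1 h)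
  obtain ⟨z, hz0, hnodup, hrot⟩ :=
    exists_generic_level hB (finite_setOf_pow_eq_one hmS hm) fun ζ hζ => comp_monomialSum_ne hgcd hζ
  have hroot {a : L} (ha : a ∈ (B - C z).roots) : B.eval a = z := by
    simpa [sub_eq_zero] using (mem_roots'.1 ha).2
  have hroot0 {a : L} (ha : a ∈ (B - C z).roots) : a ≠ 0 := fun h => hz0 (h ▸ hroot ha)
  refine ⟨B - C z, fun k hk => ?_, by rw [natDegree_sub_C, hdeg], hnodup, fun a => hroot0, ?_⟩
  · by_contra hkS
    have hk0 : k ≠ 0 := fun h => hkS (h ▸ h0)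
    simp [B, coeff_monomialSum, coeff_C, hkS, hk0] at hk
  · intro a ha b hb hab
    by_contra! hpow
    refine hrot b (hroot hb) (a / b) ⟨by rwa [Ne, div_eq_one_iff_eq (hroot0 hb)], hpow⟩ ?_
    rw [div_mul_cancel₀ _ (hroot0 hb), hroot ha]

lemma exists_pow_ne_pow {M : Type*} [Monoid M] {x : M} {S S' : Finset ℕ} (hS : S.Nonempty)
    (hS' : S'.Nonempty) (h0 : 0 ∈ S ∪ S') (h : ∃ k ∈ S ∪ S', x ^ k ≠ 1) :
    ∃ k ∈ S, ∃ r ∈ S', x ^ k ≠ x ^ r := by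
  by_contra! heq
  obtain ⟨⟨k, hk⟩, r, hr⟩ := And.intro hS hS'
  have hall : ∀ j ∈ S ∪ S', x ^ j = x ^ r := fun j hj =>
    (Finset.mem_union.1 hj).elim (fun hj => heq j hj r hr)
      fun hj => (heq k hk j hj).symm.trans (heq k hk r hr)
  obtain ⟨j, hj, hjx⟩ := h
  exact hjx ((hall j hj).trans ((hall 0 h0).symm.trans (pow_zero x)))

end FiberWitness

section GenericSupports

universe u

/-- The normalization of the supports `SS 0, SS 1, SS 2, SS 3` of `P₀, Q₀, P₁, Q₁`, with
`n = max (SP₀ ∪ SQ₀)` and `m = max (SP₁ ∪ SQ₁)`. -/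
structure NormalizedSupports (SS : Fin 4 → Finset ℕ) (n m : ℕ) : Prop where
  nonempty : ∀ i, (SS i).Nonempty
  zero_mem₀ : 0 ∈ SS 0 ∪ SS 1
  zero_mem₁ : 0 ∈ SS 2 ∪ SS 3
  mem₀ : n ∈ SS 0 ∪ SS 1
  mem₁ : m ∈ SS 2 ∪ SS 3
  le₀ : ∀ s ∈ SS 0 ∪ SS 1, s ≤ n
  le₁ : ∀ s ∈ SS 2 ∪ SS 3, s ≤ m
  ne_zero₀ : n ≠ 0
  ne_zero₁ : m ≠ 0
  gcd_eq_one : ∀ d, (∀ s ∈ SS 0 ∪ SS 1, d ∣ s) → (∀ s ∈ SS 2 ∪ SS 3, d ∣ s) → d = 1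

lemma NormalizedSupports.swap {SS : Fin 4 → Finset ℕ} {n m : ℕ} (h : NormalizedSupports SS n m) :
    NormalizedSupports (fun i => SS (i + 2)) m n where
  nonempty i := h.nonempty (i + 2)
  zero_mem₀ := h.zero_mem₁
  zero_mem₁ := h.zero_mem₀
  mem₀ := h.mem₁
  mem₁ := h.mem₀
  le₀ := h.le₁
  le₁ := h.le₀
  ne_zero₀ := h.ne_zero₁
  ne_zero₁ := h.ne_zero₀
  gcd_eq_one d h₀ h₁ := h.gcd_eq_one d h₁ h₀

lemma Generically.reindex {K : Type*} [Field K] {ι κ : Type*} {SS : ι → Finset ℕ} {e : κ → ι}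
    (he : Function.Injective e) {p : (κ → K[X]) → Prop}
    (hp : Generically fun c : CoeffIndex (fun k => SS (e k)) → K => p (coeffPoly _ c)) :
    Generically fun c : CoeffIndex SS → K => p fun k => coeffPoly SS c (e k) := by
  have hinj : Function.Injective
      (Sigma.map e fun _ => id : CoeffIndex (fun k => SS (e k)) → CoeffIndex SS) :=
    he.sigma_map fun _ => Function.injective_id
  exact (hp.comp_injective hinj).mono fun _ => id

variable {K : Type u} [Field K] {ι : Type} {SS : ι → Finset ℕ} {i j : ι} {n : ℕ}

lemma exists_family {L : Type*} [CommRing L] {i j : ι} (hij : i ≠ j) {p q : L[X]}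
    (hp : p.support ⊆ SS i) (hq : q.support ⊆ SS j) :
    ∃ P : ι → L[X], (∀ k, (P k).support ⊆ SS k) ∧ P i = p ∧ P j = q := by
  classical
  refine ⟨Function.update (Pi.single i p) j q, fun k => ?_, by simp [hij], by simp⟩
  rcases eq_or_ne k j with rfl | hkj
  · simpa using hq
  rcases eq_or_ne k i with rfl | hki
  · simpa [hkj] using hp
  · simp [hkj, hki]

lemma resultant_monomialSum_X_pow_ne_zero {S : Finset ℕ} {r : ℕ} (hS : ∀ s ∈ S, s ≤ n)
    (hr : r ≤ n) (h0 : 0 ∈ S) (hn : n ∈ S ∨ r = n) :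
    resultant (monomialSum K S) (X ^ r) n n ≠ 0 := by
  have hdeg : (monomialSum K S).natDegree ≤ n := natDegree_le_iff_coeff_eq_zero.2 fun k hk => by
    rw [coeff_monomialSum, if_neg fun hkS => hk.not_ge (hS k hkS)]
  obtain ⟨e, rfl⟩ := Nat.exists_eq_add_of_le hr
  rw [resultant_add_right_deg _ _ _ _ _ (natDegree_X_pow_le r), resultant_X_pow_right _ _ _ hdeg,
    coeff_monomialSum, coeff_monomialSum, if_pos h0, one_pow, mul_one]
  refine mul_ne_zero ?_ (pow_ne_zero _ (by simp))
  rcases hn with hn | hn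
  · simp [hn]
  · simp [Nat.left_eq_add.1 hn]

lemma generically_isCoprime_of_zero_mem (hij : i ≠ j) (hj : (SS j).Nonempty) (h0 : 0 ∈ SS i)
    (hn : n ≠ 0) (hmem : n ∈ SS i ∪ SS j) (hmax : ∀ s ∈ SS i ∪ SS j, s ≤ n) :
    Generically fun c : CoeffIndex SS → K => IsCoprime (coeffPoly SS c i) (coeffPoly SS c j) := by
  obtain ⟨r, hr, hrn⟩ : ∃ r ∈ SS j, n ∈ SS i ∨ r = n := by
    rcases Finset.mem_union.1 hmem with h | h
    · exact hj.imp fun r hr => ⟨hr, Or.inl h⟩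
    · exact ⟨n, h, Or.inr rfl⟩
  have hmaxi s (hs : s ∈ SS i) : s ≤ n := hmax s (Finset.mem_union_left _ hs)
  have hmaxj s (hs : s ∈ SS j) : s ≤ n := hmax s (Finset.mem_union_right _ hs)
  obtain ⟨P, hP, hPi, hPj⟩ := exists_family hij (support_monomialSum_subset (A := K) (SS i))
    (support_X_pow_subset_of_mem hr)
  refine (Generically.of_natural (fun A _ _ P => resultant (P i) (P j) n n)
    (fun φ P => resultant_map_map _ _ _ _ _) hP ?_).mono fun c hc =>
      isCoprime_of_resultant_ne_zero (natDegree_coeffPoly_le hmaxi)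
        (natDegree_coeffPoly_le hmaxj) hn hc
  rw [hPi, hPj]
  exact resultant_monomialSum_X_pow_ne_zero hmaxi (hmaxj r hr) h0 hrn

lemma generically_isCoprime (hij : i ≠ j) (hi : (SS i).Nonempty) (hj : (SS j).Nonempty)
    (h0 : 0 ∈ SS i ∪ SS j)
    (hn : n ≠ 0) (hmem : n ∈ SS i ∪ SS j) (hmax : ∀ s ∈ SS i ∪ SS j, s ≤ n) :
    Generically fun c : CoeffIndex SS → K => IsCoprime (coeffPoly SS c i) (coeffPoly SS c j) := by
  rcases Finset.mem_union.1 h0 with h | h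
  · exact generically_isCoprime_of_zero_mem hij hj h hn hmem hmax
  · rw [Finset.union_comm] at hmem hmax
    exact (generically_isCoprime_of_zero_mem hij.symm hi h hn hmem hmax).mono fun c =>
      IsCoprime.symm

lemma generically_eval_ne_zero {a : K} (ha : a ≠ 0) (hj : (SS j).Nonempty) :
    Generically fun c : CoeffIndex SS → K => (coeffPoly SS c j).eval a ≠ 0 := by
  classical
  obtain ⟨r, hr⟩ := hj
  refine Generically.of_natural (P := Pi.single j (X ^ r : K[X]))
    (fun A (_ : CommRing A) (_ : Algebra K A) (P : ι → A[X]) => (P j).eval (algebraMap K A a))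
    ?_ (fun k => ?_) ?_
  · intro A B _ _ _ _ φ P
    rw [← φ.commutes]
    exact eval_map_apply _ _
  · rcases eq_or_ne k j with rfl | hkj
    · simpa using support_X_pow_subset_of_mem (A := K) hr
    · simp [hkj]
  · simp [ha]

lemma generically_eval_mul_eval_ne {a b : K} (hb : b ≠ 0) (hij : i ≠ j)
    (hi : (SS i).Nonempty) (hj : (SS j).Nonempty) (h0 : 0 ∈ SS i ∪ SS j)
    (hab : ∃ k ∈ SS i ∪ SS j, (a / b) ^ k ≠ 1) :
    Generically fun c : CoeffIndex SS → K =>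
      (coeffPoly SS c i).eval a * (coeffPoly SS c j).eval b -
        (coeffPoly SS c i).eval b * (coeffPoly SS c j).eval a ≠ 0 := by
  obtain ⟨k, hk, r, hr, hkr⟩ := exists_pow_ne_pow hi hj h0 hab
  obtain ⟨P, hP, hPi, hPj⟩ := exists_family (L := K) hij (support_X_pow_subset_of_mem hk)
    (support_X_pow_subset_of_mem hr)
  refine Generically.of_natural
    (fun A (_ : CommRing A) (_ : Algebra K A) (P : ι → A[X]) =>
      (P i).eval (algebraMap K A a) * (P j).eval (algebraMap K A b) -
      (P i).eval (algebraMap K A b) * (P j).eval (algebraMap K A a)) ?_ hP ?_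
  · intro A B _ _ _ _ φ P
    have heval (l : ι) (z : K) : ((P l).map (φ : A →+* B)).eval (algebraMap K B z) =
        φ ((P l).eval (algebraMap K A z)) := by
      rw [← φ.commutes]
      exact eval_map_apply _ _
    simp only [heval, map_sub, map_mul]
  · simp only [hPi, hPj, eval_pow, eval_X, Algebra.algebraMap_self, RingHom.id_apply, sub_ne_zero]
    rw [div_pow, div_pow, Ne, div_eq_div_iff (pow_ne_zero _ hb) (pow_ne_zero _ hb)] at hkr
    rwa [mul_comm (b ^ k)]

lemma exists_separating_family {L : Type u} [Field L] [Infinite L] (hij : i ≠ j)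
    (hi : (SS i).Nonempty) (hj : (SS j).Nonempty) (h0 : 0 ∈ SS i ∪ SS j) (T : Finset L)
    (hT0 : ∀ a ∈ T, a ≠ 0)
    (hT : ∀ a ∈ T, ∀ b ∈ T, a ≠ b → ∃ k ∈ SS i ∪ SS j, (a / b) ^ k ≠ 1) :
    ∃ c : CoeffIndex SS → L, (∀ a ∈ T, (coeffPoly SS c j).eval a ≠ 0) ∧
      ∀ a ∈ T, ∀ b ∈ T, (coeffPoly SS c i).eval a / (coeffPoly SS c j).eval a =
        (coeffPoly SS c i).eval b / (coeffPoly SS c j).eval b → a = b := by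
  classical
  obtain ⟨c, hc0, hc⟩ := ((Generically.ball T fun a ha =>
    generically_eval_ne_zero (hT0 a ha) hj).and (Generically.ball T.offDiag fun x hx =>
      generically_eval_mul_eval_ne (hT0 x.2 (Finset.mem_offDiag.1 hx).2.1) hij hi hj h0
        (hT x.1 (Finset.mem_offDiag.1 hx).1 x.2 (Finset.mem_offDiag.1 hx).2.1
          (Finset.mem_offDiag.1 hx).2.2))).exists_point
  refine ⟨c, hc0, fun a ha b hb hab => of_not_not fun hne => ?_⟩
  rw [div_eq_div_iff (hc0 a ha) (hc0 b hb)] at hab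
  exact hc (a, b) (Finset.mem_offDiag.2 ⟨ha, hb, hne⟩) (sub_eq_zero.2 hab)

lemma exists_sub_eq_of_support_subset {A : Type*} [CommRing A] {S S' : Finset ℕ} {f : A[X]}
    (hf : f.support ⊆ S ∪ S') :
    ∃ p q : A[X], p.support ⊆ S ∧ q.support ⊆ S' ∧ q - p = f := by
  let q : A[X] := ∑ s ∈ S', C (f.coeff s) * X ^ s
  have hq (k : ℕ) : q.coeff k = if k ∈ S' then f.coeff k else 0 := by
    simp [q, finsetSum_coeff, coeff_C_mul, coeff_X_pow]
  refine ⟨q - f, q, fun k hk => ?_, fun k hk => ?_, sub_sub_cancel q f⟩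
  · have hkS' : k ∉ S' := fun h => by simp [hq, h] at hk
    have hkf : k ∈ f.support := by simpa [hq, hkS'] using hk
    exact (Finset.mem_union.1 (hf hkf)).resolve_right hkS'
  · exact of_not_not fun h => by simp [hq, h] at hk

lemma aeval_ne_zero_of_isCoprime {L : Type*} [Field L] [Algebra K L] {p q : K[X]}
    (hpq : IsCoprime p q) {a : L} (h : aeval a p = aeval a q) : aeval a q ≠ 0 := fun hq => by
  have := hpq.map (aeval a : K[X] →ₐ[K] L).toRingHom
  simp only [AlgHom.toRingHom_eq_coe, RingHom.coe_coe, h, hq] at this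
  exact not_isCoprime_zero_zero this

end GenericSupports

section GenericFiber

universe u

variable {K L : Type u} [Field K] [Field L] [Algebra K L] [IsAlgClosed L] [CharZero L]
  {SS : Fin 4 → Finset ℕ} {n m : ℕ}

lemma NormalizedSupports.exists_fiberCertificate_ne_zero (h : NormalizedSupports SS n m) :
    ∃ P : Fin 4 → L[X], (∀ i, (P i).support ⊆ SS i) ∧
      fiberCertificate (P 1 - P 0) (P 2) (P 3) n m ≠ 0 := by
  obtain ⟨f, hsupp, hdeg, hnodup, hroots0, hsep⟩ := exists_separated_roots (L := L) h.ne_zero₀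
    h.mem₀ h.le₀ h.zero_mem₀ h.ne_zero₁ h.mem₁ h.gcd_eq_one
  have hf0 : f ≠ 0 := fun hf => h.ne_zero₀ (by rw [← hdeg, hf, natDegree_zero])
  obtain ⟨p, q, hp, hq, hpq⟩ := exists_sub_eq_of_support_subset hsupp
  obtain ⟨c, hc0, hc⟩ := exists_separating_family (i := 2) (j := 3) (by decide) (h.nonempty 2)
    (h.nonempty 3) h.zero_mem₁ ⟨f.roots, hnodup⟩ hroots0 hsep
  refine ⟨![p, q, coeffPoly SS c 2, coeffPoly SS c 3], fun i => ?_, ?_⟩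
  · fin_cases i
    exacts [hp, hq, support_coeffPoly_subset, support_coeffPoly_subset]
  · change fiberCertificate (q - p) (coeffPoly SS c 2) (coeffPoly SS c 3) n m ≠ 0
    rw [hpq]
    exact fiberCertificate_ne_zero hdeg hf0
      (natDegree_coeffPoly_le fun s hs => h.le₁ s (Finset.mem_union_left _ hs))
      (natDegree_coeffPoly_le fun s hs => h.le₁ s (Finset.mem_union_right _ hs)) hnodup hc0 hc

/-- The parametrization `x = P 0 / P 1`, `y = P 2 / P 3` is in general position with respect to the
line `x = 1`: the first fraction is reduced, of degree `n`, and takes the value `1` at points where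
`y` takes `n` distinct values. -/
structure HasFullFiber (L : Type*) {K : Type*} [Field K] [Field L] [Algebra K L]
    (P : Fin 4 → K[X]) (n : ℕ) : Prop where
  isCoprime : IsCoprime (P 0) (P 1)
  coeff_ne_zero : (P 1 - P 0).coeff n ≠ 0
  exists_values : ∃ T : Finset L, T.card = n ∧ ∀ y ∈ T, ∃ a : L, aeval a (P 1) ≠ 0 ∧
    aeval a (P 3) ≠ 0 ∧ aeval a (P 0) / aeval a (P 1) = 1 ∧ aeval a (P 2) / aeval a (P 3) = y

theorem NormalizedSupports.generically_hasFullFiber (h : NormalizedSupports SS n m) :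
    Generically fun c : CoeffIndex SS → K => HasFullFiber L (coeffPoly SS c) n := by
  obtain ⟨P, hP, hcert⟩ := h.exists_fiberCertificate_ne_zero (L := L)
  have hgen := Generically.of_natural (K := K)
    (fun A _ _ (P : Fin 4 → A[X]) => fiberCertificate (P 1 - P 0) (P 2) (P 3) n m)
    (fun φ P => by rw [← Polynomial.map_sub]; exact map_fiberCertificate _ _ _ _ _ _) hP hcert
  refine ((generically_isCoprime (by decide) (h.nonempty 0) (h.nonempty 1) h.zero_mem₀ h.ne_zero₀
    h.mem₀ h.le₀).and hgen).mono fun c ⟨hcop, hc⟩ => ⟨hcop, ?_, ?_⟩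
  · exact left_ne_zero_of_mul (left_ne_zero_of_mul hc)
  have hdeg {i} {d : ℕ} (hd : ∀ s ∈ SS i, s ≤ d) :
      ((coeffPoly SS c i).map (algebraMap K L)).natDegree ≤ d :=
    natDegree_map_le.trans (natDegree_coeffPoly_le hd)
  have hdeg₁ : ((coeffPoly SS c 1 - coeffPoly SS c 0).map (algebraMap K L)).natDegree ≤ n := by
    rw [Polynomial.map_sub]
    exact (natDegree_sub_le _ _).trans (max_le
      (hdeg fun s hs => h.le₀ s (Finset.mem_union_right _ hs))
      (hdeg fun s hs => h.le₀ s (Finset.mem_union_left _ hs)))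
  obtain ⟨T, hT, hval⟩ := exists_values_of_fiberCertificate_ne_zero hdeg₁
    (hdeg fun s hs => h.le₁ s (Finset.mem_union_left _ hs))
    (hdeg fun s hs => h.le₁ s (Finset.mem_union_right _ hs))
    (map_fiberCertificate (algebraMap K L) _ _ _ n m ▸ (map_ne_zero (algebraMap K L)).2 hc)
  refine ⟨T, hT, fun y hy => ?_⟩
  obtain ⟨a, hfa, hqa, hpa⟩ := hval y hy
  simp only [eval_map_algebraMap, map_sub, sub_eq_zero] at hfa hqa hpa
  have hq₀ := aeval_ne_zero_of_isCoprime hcop hfa.symm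
  exact ⟨a, hq₀, hqa, by rw [← hfa, div_self hq₀], by rw [hpa, mul_div_cancel_right₀ _ hqa]⟩

end GenericFiber

/-! ### Generic corner coefficients -/

section GenericCornerCoefficients

universe u

variable (K : Type u) [Field K] (SS : Fin 4 → Finset ℕ) (n m : ℕ)

/-- The monomial `x ^ i * y ^ j` occurs in the implicit resultant for generic coefficients. -/
def GenericallyOccurs (i j : ℕ) : Prop :=
  Generically fun c : CoeffIndex SS → K => bicoeff (implicitResultant (coeffPoly SS c 0)
    (coeffPoly SS c 1) (coeffPoly SS c 2) (coeffPoly SS c 3) n m) i j ≠ 0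

/-- The shift of the exponents in `S` at the end `0`, which counts only if `0` is not an exponent of
the other denominator. -/
def lowCut (S S' : Finset ℕ) (hS : S.Nonempty) : ℕ := if 0 ∈ S' then 0 else S.min' hS

/-- The drop from `n` of the exponents in `S`, which counts only if the degree `m` of the other
fraction is not attained by its denominator. -/
def highCut (S S' : Finset ℕ) (hS : S.Nonempty) (n m : ℕ) : ℕ :=
  if m ∈ S' then 0 else n - S.max' hS

variable {K SS n m}

lemma lowCut_le {S S' : Finset ℕ} (hS : S.Nonempty) {k : ℕ} (hk : k ∈ S) :
    lowCut S S' hS ≤ k := by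
  rw [lowCut]
  split_ifs
  exacts [k.zero_le, S.min'_le k hk]

lemma add_highCut_le {S S' : Finset ℕ} (hS : S.Nonempty) (hn : ∀ s ∈ S, s ≤ n) {k : ℕ}
    (hk : k ∈ S) : k + highCut S S' hS n m ≤ n := by
  have hkS := S.le_max' k hk
  have hSn := hn _ (S.max'_mem hS)
  rw [highCut]
  split_ifs <;> omega

lemma GenericallyOccurs.swap {i j : ℕ} (h : GenericallyOccurs K (fun k => SS (k + 2)) m n i j) :
    GenericallyOccurs K SS n m j i := by
  refine (Generically.reindex (SS := SS) (e := (· + 2)) (add_left_injective 2)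
    (p := fun P => bicoeff (implicitResultant (P 0) (P 1) (P 2) (P 3) m n) i j ≠ 0) h).mono
      fun c hc => ?_
  rw [bicoeff_implicitResultant_swap]
  exact mul_ne_zero (pow_ne_zero _ (neg_ne_zero.2 one_ne_zero)) hc

lemma GenericallyOccurs.of_family {i j : ℕ} {P : Fin 4 → K[X]} (hP : ∀ k, (P k).support ⊆ SS k)
    (h : bicoeff (implicitResultant (P 0) (P 1) (P 2) (P 3) n m) i j ≠ 0) :
    GenericallyOccurs K SS n m i j := by
  refine Generically.of_natural (fun A (_ : CommRing A) (_ : Algebra K A) (P : Fin 4 → A[X]) =>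
    bicoeff (implicitResultant (P 0) (P 1) (P 2) (P 3) n m) i j) ?_ hP h
  intro A B _ _ _ _ φ P
  rw [map_implicitResultant, bicoeff_map, RingHom.coe_coe]

lemma exists_monomialSum_eq_X_pow_mul {S : Finset ℕ} (hS : S.Nonempty) :
    ∃ u : K[X], monomialSum K S = X ^ S.min' hS * u ∧ u.coeff 0 ≠ 0 ∧
      S.min' hS + u.natDegree = S.max' hS := by
  obtain ⟨u, hu⟩ : X ^ S.min' hS ∣ monomialSum K S := X_pow_dvd_iff.2 fun k hk => by
    rw [coeff_monomialSum, if_neg fun hkS => hk.not_ge (S.min'_le k hkS)]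
  have hu0 : u.coeff 0 ≠ 0 := by
    have := coeff_X_pow_mul u (S.min' hS) 0
    rw [← hu, zero_add, coeff_monomialSum, if_pos (S.min'_mem hS)] at this
    exact this ▸ one_ne_zero
  refine ⟨u, hu, hu0, ?_⟩
  have hdeg : (monomialSum K S).natDegree = S.max' hS := by
    refine natDegree_eq_of_le_of_coeff_ne_zero (natDegree_le_iff_coeff_eq_zero.2 fun k hk => ?_) ?_
    · rw [coeff_monomialSum, if_neg fun hkS => hk.not_ge (S.le_max' k hkS)]
    · simp [coeff_monomialSum, S.max'_mem hS]
  rw [← hdeg, hu, natDegree_X_pow_mul _ fun h => hu0 (by simp [h]), add_comm]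

namespace NormalizedSupports

lemma exists_mem_iff (h : NormalizedSupports SS n m) (hends : ¬(0 ∈ SS 1 ∧ n ∈ SS 1)) :
    ∃ r ∈ SS 1, (0 = r ↔ 0 ∈ SS 1) ∧ (n = r ↔ n ∈ SS 1) := by
  by_cases h0 : 0 ∈ SS 1
  · exact ⟨0, h0, by simp [h0], by simpa [h.ne_zero₀] using fun hn => hends ⟨h0, hn⟩⟩
  by_cases hn : n ∈ SS 1
  · exact ⟨n, hn, by simpa [h0] using h.ne_zero₀.symm, by simp [hn]⟩
  obtain ⟨r, hr⟩ := h.nonempty 1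
  exact ⟨r, hr, iff_of_false (fun h => h0 (h ▸ hr)) h0, iff_of_false (fun h => hn (h ▸ hr)) hn⟩

theorem genericallyOccurs_top (h : NormalizedSupports SS n m) (hends : ¬(0 ∈ SS 1 ∧ n ∈ SS 1)) :
    GenericallyOccurs K SS n m (m - lowCut (SS 3) (SS 1) (h.nonempty 3) -
      highCut (SS 3) (SS 1) (h.nonempty 3) m n) n := by
  obtain ⟨r, hr, hr0, hrn⟩ := h.exists_mem_iff hends
  obtain ⟨u, hu, hu0, hdeg⟩ := exists_monomialSum_eq_X_pow_mul (K := K) (h.nonempty 3)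
  have hmax := h.le₁ _ (Finset.mem_union_right _ ((SS 3).max'_mem (h.nonempty 3)))
  obtain ⟨M, hM⟩ := Nat.exists_eq_add_of_le hmax
  have hm : (SS 3).min' (h.nonempty 3) + u.natDegree + M = m := by omega
  have hcoeff {k : ℕ} (hk : k ∈ SS 0 ∪ SS 1) (hkr : k = r ↔ k ∈ SS 1) :
      k = r ∨ (monomialSum K (SS 0)).coeff k ≠ 0 := by
    by_cases h' : k ∈ SS 1
    · exact Or.inl (hkr.2 h')
    · exact Or.inr (by simp [coeff_monomialSum, (Finset.mem_union.1 hk).resolve_right h'])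
  have hle : (monomialSum K (SS 0)).natDegree ≤ n := natDegree_le_iff_coeff_eq_zero.2 fun k hk => by
    rw [coeff_monomialSum,
      if_neg fun hkS => hk.not_ge (h.le₀ k (Finset.mem_union_left _ hkS))]
  have hne := bicoeff_implicitResultant_X_pow_ne_zero ((SS 3).min' (h.nonempty 3)) M hle
    (h.le₀ r (Finset.mem_union_right _ hr)) hu0 (hcoeff h.zero_mem₀ hr0) (hcoeff h.mem₀ hrn)
  rw [hm, ← hu] at hne
  convert GenericallyOccurs.of_family (SS := SS)
    (P := ![monomialSum K (SS 0), X ^ r, 0, monomialSum K (SS 3)]) (fun k => ?_) hne using 1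
  · simp only [lowCut, highCut, ← hr0, ← hrn]
    split_ifs <;> omega
  · fin_cases k
    exacts [support_monomialSum_subset _, support_X_pow_subset_of_mem hr, by simp,
      support_monomialSum_subset _]

theorem genericallyOccurs_right (h : NormalizedSupports SS n m) (hends : ¬(0 ∈ SS 3 ∧ m ∈ SS 3)) :
    GenericallyOccurs K SS n m m (n - lowCut (SS 1) (SS 3) (h.nonempty 1) -
      highCut (SS 1) (SS 3) (h.nonempty 1) n m) :=
  (h.swap.genericallyOccurs_top hends).swap

theorem genericallyOccurs_inner (h : NormalizedSupports SS n m) (h0 : 0 ∉ SS 3) (hn : n ∉ SS 1) :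
    GenericallyOccurs K SS n m ((SS 3).max' (h.nonempty 3)) (n - (SS 1).min' (h.nonempty 1)) := by
  have hL := (SS 1).min'_mem (h.nonempty 1)
  have hR := (SS 3).max'_mem (h.nonempty 3)
  obtain ⟨e, he⟩ := Nat.exists_eq_add_of_le (h.le₀ _ (Finset.mem_union_right _ hL))
  obtain ⟨M, hM⟩ := Nat.exists_eq_add_of_le (h.le₁ _ (Finset.mem_union_right _ hR))
  have he0 : e ≠ 0 := fun he0 => hn (by rwa [he, he0, add_zero])
  have hne := bicoeff_implicitResultant_monomials_ne_zero (A := K)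
    (L := (SS 1).min' (h.nonempty 1)) M he0 fun hR0 => h0 (hR0 ▸ hR)
  rw [← he, ← hM] at hne
  rw [show n - (SS 1).min' (h.nonempty 1) = e by omega]
  refine GenericallyOccurs.of_family (P := ![-X ^ n, X ^ (SS 1).min' (h.nonempty 1), -1,
    X ^ (SS 3).max' (h.nonempty 3)]) (fun k => ?_) hne
  fin_cases k
  · simpa using support_X_pow_subset_of_mem (A := K) ((Finset.mem_union.1 h.mem₀).resolve_right hn)
  · exact support_X_pow_subset_of_mem hL
  · simpa using support_X_pow_subset_of_mem (A := K)
      ((Finset.mem_union.1 h.zero_mem₁).resolve_right h0)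
  · exact support_X_pow_subset_of_mem hR

end NormalizedSupports

end GenericCornerCoefficients

/-! ### The implicit equation -/

section BivariateEvaluation

variable {K F : Type*} [Field K] [Field F] [Algebra K F]

lemma map_aevalAeval {A B : Type*} [CommRing A] [CommRing B] [Algebra K A] [Algebra K B]
    (g : A →ₐ[K] B) (x y : A) (ψ : K[X][X]) :
    g (aevalAeval x y ψ) = aevalAeval (g x) (g y) ψ := by
  have h : g.comp (aevalAeval x y) = aevalAeval (g x) (g y) := by
    refine (aevalAevalEquiv K B).symm.injective (Prod.ext ?_ ?_) <;> simp
  exact DFunLike.congr_fun h ψ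

lemma aevalAeval_eq_eval₂ (x y : F) (ψ : K[X][X]) :
    aevalAeval x y ψ = ψ.eval₂ (aeval x : K[X] →ₐ[K] F).toRingHom y := by
  induction ψ using Polynomial.induction_on' with
  | add p q hp hq => rw [map_add, eval₂_add, hp, hq]
  | monomial k p => simp

lemma liftAlgHom_mk'_eq_div {A : Type*} [CommRing A] [Algebra K A] {M : Submonoid A}
    {f : A →ₐ[K] F} (hf : ∀ y : M, IsUnit (f y)) (p : A) (q : M) :
    IsLocalization.liftAlgHom (S := Localization M) hf (IsLocalization.mk' _ p q) = f p / f q :=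
  (IsLocalization.lift_mk'_spec _ _ _ _).2 (mul_div_cancel₀ _ (hf q).ne_zero).symm

/-- A relation between fractions specializes to every point where the denominators do not vanish:
it can be read in the localization at the elements that do not vanish there. -/
lemma aevalAeval_div_eq_zero {A F' : Type*} [CommRing A] [Algebra K A] [Field F'] [Algebra K F']
    {f : A →ₐ[K] F} (hf : Function.Injective f) (g : A →ₐ[K] F') {p₀ q₀ p₁ q₁ : A}
    (h₀ : g q₀ ≠ 0) (h₁ : g q₁ ≠ 0) {ψ : K[X][X]}
    (h : aevalAeval (f p₀ / f q₀) (f p₁ / f q₁) ψ = 0) :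
    aevalAeval (g p₀ / g q₀) (g p₁ / g q₁) ψ = 0 := by
  have : IsDomain A := hf.isDomain f.toRingHom
  let M : Submonoid A := (nonZeroDivisors F').comap g
  have hM {y : A} : y ∈ M ↔ g y ≠ 0 := mem_nonZeroDivisors_iff_ne_zero
  have hM0 : (0 : A) ∉ M := fun h => hM.1 h (map_zero g)
  have hgM (y : M) : IsUnit (g y) := (hM.1 y.2).isUnit
  have hfM (y : M) : IsUnit (f y) :=
    ((map_ne_zero_iff f hf).2 fun h => hM0 (h ▸ y.2)).isUnit
  have hinj : Function.Injective (IsLocalization.liftAlgHom (S := Localization M) hfM) :=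
    (IsLocalization.lift_injective_iff (hg := hfM) (S := Localization M) (M := M)).2 fun x y => by
      rw [(IsLocalization.injective (Localization M)
        (le_nonZeroDivisors_of_noZeroDivisors hM0)).eq_iff]
      exact hf.eq_iff.symm
  rw [← liftAlgHom_mk'_eq_div hfM p₀ ⟨q₀, hM.2 h₀⟩, ← liftAlgHom_mk'_eq_div hfM p₁ ⟨q₁, hM.2 h₁⟩,
    ← map_aevalAeval, map_eq_zero_iff _ hinj] at h
  rw [← liftAlgHom_mk'_eq_div hgM p₀ ⟨q₀, hM.2 h₀⟩, ← liftAlgHom_mk'_eq_div hgM p₁ ⟨q₁, hM.2 h₁⟩,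
    ← map_aevalAeval, h, map_zero]

lemma dvd_of_aevalAeval_eq_zero {x y : F} (hx : Transcendental K x) {ψ R : K[X][X]}
    (hψ : Irreducible ψ) (hdeg : ψ.natDegree ≠ 0) (h : aevalAeval x y ψ = 0)
    (hR : aevalAeval x y R = 0) : ψ ∣ R := by
  have hprim := hψ.isPrimitive hdeg
  refine hprim.dvd_of_fraction_map_dvd_fraction_map (K := FractionRing K[X]) ?_
  have hirr := (hprim.irreducible_iff_irreducible_map_fraction_map (K := FractionRing K[X])).1 hψ
  have hinj : Function.Injective (aeval x : K[X] →ₐ[K] F).toRingHom :=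
    transcendental_iff_injective.1 hx
  have heval (p : K[X][X]) : (p.map (algebraMap K[X] (FractionRing K[X]))).eval₂
      (IsFractionRing.lift hinj) y = aevalAeval x y p := by
    rw [eval₂_map, aevalAeval_eq_eval₂]
    exact congrArg (p.eval₂ · y) (RingHom.ext (IsFractionRing.lift_algebraMap hinj))
  by_contra hdvd
  obtain ⟨a, b, hab⟩ := hirr.coprime_iff_not_dvd.2 hdvd
  have hzero := congrArg (eval₂ (IsFractionRing.lift hinj) y) hab
  rw [eval₂_add, eval₂_mul, eval₂_mul, heval, heval, h, hR, eval₂_one] at hzero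
  simp at hzero

lemma map_evalRingHom_ne_zero {a : K} {ψ : K[X][X]} (hψ : Irreducible ψ) {x y : F}
    (hx : x ≠ algebraMap K F a) (h : aevalAeval x y ψ = 0) : ψ.map (evalRingHom a) ≠ 0 :=
  fun h0 => by
  have hdvd : C (X - C a) ∣ ψ := (C_dvd_iff_dvd_coeff _ _).2 fun i => dvd_iff_isRoot.2 <| by
    simpa using congrArg (coeff · i) h0
  have hirr : Irreducible (C (X - C a) : K[X][X]) := (prime_C_iff.2 (prime_X_sub_C a)).irreducible
  obtain ⟨u, hu⟩ := ((hirr.dvd_irreducible_iff_associated hψ).1 hdvd).symm.dvd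
  have hzero := congrArg (aevalAeval x y) hu
  rw [map_mul, h, zero_mul, aevalAeval_C] at hzero
  exact hx (sub_eq_zero.1 (by simpa using hzero))

lemma exists_eq_mul_C_C_of_dvd {ψ R : K[X][X]} (h : ψ ∣ R) (hR : R ≠ 0)
    (hy : R.natDegree ≤ ψ.natDegree)
    (hx : (Bivariate.swap (R := K) R).natDegree ≤ (Bivariate.swap (R := K) ψ).natDegree) :
    ∃ κ : K, κ ≠ 0 ∧ R = ψ * C (C κ) := by
  obtain ⟨s, rfl⟩ := h
  have hψ := left_ne_zero_of_mul hR
  have hs := right_ne_zero_of_mul hR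
  have hswap {p : K[X][X]} (hp : p ≠ 0) : Bivariate.swap (R := K) p ≠ 0 :=
    (map_ne_zero_iff _ (Bivariate.swap (R := K)).injective).2 hp
  rw [natDegree_mul hψ hs] at hy
  rw [map_mul, natDegree_mul (hswap hψ) (hswap hs)] at hx
  obtain ⟨r, rfl⟩ := natDegree_eq_zero.1 (show s.natDegree = 0 by omega)
  rw [Bivariate.swap_C, natDegree_map_eq_of_injective C_injective] at hx
  obtain ⟨κ, rfl⟩ := natDegree_eq_zero.1 (show r.natDegree = 0 by omega)
  exact ⟨κ, by simpa using hs, rfl⟩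

lemma coeff_equivMvPolynomial {A : Type*} [CommRing A] (ψ : A[X][X]) (d : Fin 2 →₀ ℕ) :
    (Bivariate.equivMvPolynomial A ψ).coeff d = bicoeff ψ (d 0) (d 1) := by
  induction ψ using Polynomial.induction_on' with
  | add p q hp hq => rw [map_add, MvPolynomial.coeff_add, hp, hq, bicoeff, bicoeff, bicoeff,
      coeff_add, coeff_add]
  | monomial k p =>
    induction p using Polynomial.induction_on' with
    | add p q hp hq =>
      simp only [bicoeff, map_add, MvPolynomial.coeff_add, coeff_add] at *
      rw [hp, hq]
    | monomial l a =>
      have hd : Finsupp.single 0 l + Finsupp.single 1 k = d ↔ l = d 0 ∧ k = d 1 := by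
        simp [Finsupp.ext_iff, Fin.forall_fin_two]
      have hmon : Bivariate.equivMvPolynomial A (monomial k (monomial l a)) =
          MvPolynomial.monomial (Finsupp.single 0 l + Finsupp.single 1 k) a := by
        rw [← C_mul_X_pow_eq_monomial, ← C_mul_X_pow_eq_monomial]
        simp [MvPolynomial.X_pow_eq_monomial, MvPolynomial.monomial_mul,
          MvPolynomial.C_mul_monomial, Bivariate.equivMvPolynomial_C_C,
          Bivariate.equivMvPolynomial_C_X, Bivariate.equivMvPolynomial_X]
      classical
      simp only [hmon, MvPolynomial.coeff_monomial, hd, bicoeff, coeff_monomial]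
      by_cases hk : k = d 1 <;> simp [hk, coeff_monomial]

lemma aeval_equivMvPolynomial (x y : F) (ψ : K[X][X]) :
    MvPolynomial.aeval ![x, y] (Bivariate.equivMvPolynomial K ψ) = aevalAeval x y ψ := by
  have h : (MvPolynomial.aeval ![x, y]).comp (Bivariate.equivMvPolynomial K).toAlgHom =
      aevalAeval x y := by
    refine (aevalAevalEquiv K F).symm.injective (Prod.ext ?_ ?_) <;> simp
  exact DFunLike.congr_fun h ψ

end BivariateEvaluation

section ImplicitEquation

variable {K L F : Type*} [Field K] [Field L] [Field F] [Algebra K L] [Algebra K F]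
  {P : Fin 4 → K[X]} {n m : ℕ}

lemma resultant_eq_zero_of_common_root {f g : F[X]} (hf : f.natDegree ≤ n) (hg : g.natDegree ≤ m)
    (hn : n ≠ 0) {t : F} (hft : f.eval t = 0) (hgt : g.eval t = 0) : resultant f g n m = 0 := by
  obtain ⟨a, b, -, -, hab⟩ := exists_mul_add_mul_eq_C_resultant f g hf hg (Or.inl hn)
  simpa [hft, hgt] using (congrArg (eval t) hab).symm

lemma aevalAeval_implicitResultant {p₀ q₀ p₁ q₁ : K[X]} (hp₀ : p₀.natDegree ≤ n)
    (hq₀ : q₀.natDegree ≤ n) (hp₁ : p₁.natDegree ≤ m) (hq₁ : q₁.natDegree ≤ m) (hn : n ≠ 0)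
    {x y t : F} (hx : x * aeval t q₀ = aeval t p₀) (hy : y * aeval t q₁ = aeval t p₁) :
    aevalAeval x y (implicitResultant p₀ q₀ p₁ q₁ n m) = 0 := by
  let e : K[X][X] →+* F := (aevalAeval x y : K[X][X] →ₐ[K] F)
  have hcomp : e.comp (C.comp C) = algebraMap K F := by ext; simp [e]
  have heX : e (C X) = x := by simp [e]
  have heY : e X = y := by simp [e]
  change e (implicitResultant p₀ q₀ p₁ q₁ n m) = 0
  rw [implicitResultant, ← resultant_map_map, map_fiberPoly, map_fiberPoly, hcomp, heX, heY]
  refine resultant_eq_zero_of_common_root (natDegree_fiberPoly_le _ _ hp₀ hq₀)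
    (natDegree_fiberPoly_le _ _ hp₁ hq₁) hn (t := t) ?_ ?_
  · rw [eval_fiberPoly, ← aeval_def, ← aeval_def, hx, sub_self]
  · rw [eval_fiberPoly, ← aeval_def, ← aeval_def, hy, sub_self]

/-- The substitution `x = P 0 / P 1`, `y = P 2 / P 3` in the field of rational functions. -/
noncomputable def curveEval (P : Fin 4 → K[X]) : K[X][X] →ₐ[K] RatFunc K :=
  aevalAeval (algebraMap K[X] (RatFunc K) (P 0) / algebraMap K[X] (RatFunc K) (P 1))
    (algebraMap K[X] (RatFunc K) (P 2) / algebraMap K[X] (RatFunc K) (P 3))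

lemma curveEval_swap (P : Fin 4 → K[X]) (ψ : K[X][X]) :
    curveEval (fun i => P (i + 2)) (Bivariate.swap (R := K) ψ) = curveEval P ψ :=
  Bivariate.aevalAeval_swap _ _ _

namespace HasFullFiber

lemma ne_zero (h : HasFullFiber L P n) (hn : n ≠ 0) : P 1 ≠ 0 ∧ P 3 ≠ 0 := by
  obtain ⟨T, rfl, hT⟩ := h.exists_values
  obtain ⟨y, hy⟩ := Finset.card_ne_zero.1 hn
  obtain ⟨a, h₁, h₃, -⟩ := hT y hy
  exact ⟨fun h0 => h₁ (by simp [h0]), fun h0 => h₃ (by simp [h0])⟩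

lemma transcendental (h : HasFullFiber L P n) (hn : n ≠ 0) :
    Transcendental K
      (algebraMap K[X] (RatFunc K) (P 0) / algebraMap K[X] (RatFunc K) (P 1)) := by
  refine RatFunc.transcendental_of_ne_C _ fun ⟨c, hc⟩ => h.coeff_ne_zero ?_
  have hinj := IsFractionRing.injective K[X] (RatFunc K)
  have hP : P 0 = C c * P 1 := by
    rw [div_eq_iff ((map_ne_zero_iff _ hinj).2 (h.ne_zero hn).1), ← RatFunc.algebraMap_C,
      ← map_mul] at hc
    exact hinj hc
  obtain ⟨u, -, hP1⟩ := isUnit_iff.1 (h.isCoprime.isUnit_of_dvd' (hP ▸ dvd_mul_left _ _) dvd_rfl)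
  rw [hP, ← hP1, ← C_mul, ← C_sub, coeff_C, if_neg hn]

lemma le_natDegree (h : HasFullFiber L P n) (hn : n ≠ 0) {ψ : K[X][X]} (hψ : Irreducible ψ)
    (h0 : curveEval P ψ = 0) : n ≤ ψ.natDegree := by
  obtain ⟨T, rfl, hT⟩ := h.exists_values
  set σ := (ψ.map (evalRingHom 1)).map (algebraMap K L) with hσdef
  have hσ : σ ≠ 0 := (Polynomial.map_ne_zero_iff (algebraMap K L).injective).2
    (map_evalRingHom_ne_zero hψ (fun hx => h.transcendental hn (by
      rw [hx]
      exact isAlgebraic_algebraMap 1)) h0)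
  have hroots : T.val ⊆ σ.roots := fun y hy => by
    obtain ⟨a, h₁, h₃, hx, rfl⟩ := hT y hy
    have hzero := aevalAeval_div_eq_zero (f := IsScalarTower.toAlgHom K K[X] (RatFunc K))
      (IsFractionRing.injective K[X] (RatFunc K)) (aeval a) h₁ h₃ h0
    rw [hx, aevalAeval_eq_eval₂] at hzero
    rw [mem_roots hσ, IsRoot, hσdef, eval_map, eval₂_map, ← hzero]
    refine congrArg (ψ.eval₂ · _) (RingHom.ext fun p => ?_)
    simp [aeval_def, eval₂_at_one]
  calc T.card ≤ σ.roots.card := Multiset.card_le_card ((Multiset.le_iff_subset T.nodup).2 hroots)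
    _ ≤ σ.natDegree := card_roots' σ
    _ ≤ ψ.natDegree := natDegree_map_le.trans natDegree_map_le

end HasFullFiber

lemma natDegree_implicitResultant_le (p₀ p₁ : K[X]) {q₀ q₁ : K[X]} (hq₀ : q₀.natDegree ≤ n)
    (hq₁ : q₁.natDegree ≤ m) : (implicitResultant p₀ q₀ p₁ q₁ n m).natDegree ≤ n := by
  refine natDegree_le_iff_coeff_eq_zero.2 fun j hj => Polynomial.ext fun i => ?_
  by_contra hij
  have hle := weightLE_implicitResultant le_rfl zero_le_one (L₀ := 0) (L₁ := 0) (M₀ := 0)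
    (M₁ := 0) p₀ p₁ (by simp) (by simp)
    (fun k hk => ⟨k.zero_le, (le_natDegree_of_ne_zero hk).trans hq₀⟩)
    (fun k hk => ⟨k.zero_le, (le_natDegree_of_ne_zero hk).trans hq₁⟩) i j
    (by simpa [bicoeff] using hij)
  simp only [zero_mul, one_mul, zero_add, mul_zero, mul_one, Nat.cast_zero, min_self, sub_zero,
    Nat.cast_le] at hle
  omega

lemma natDegree_swap_implicitResultant_le (p₀ p₁ : K[X]) {q₀ q₁ : K[X]}
    (hq₀ : q₀.natDegree ≤ n) (hq₁ : q₁.natDegree ≤ m) :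
    (Bivariate.swap (R := K) (implicitResultant p₀ q₀ p₁ q₁ n m)).natDegree ≤ m := by
  refine natDegree_le_iff_coeff_eq_zero.2 fun j hj => Polynomial.ext fun i => ?_
  have hzero : (implicitResultant p₁ q₁ p₀ q₀ m n).coeff j = 0 :=
    coeff_eq_zero_of_natDegree_lt ((natDegree_implicitResultant_le _ _ hq₁ hq₀).trans_lt hj)
  change bicoeff _ i j = 0
  rw [bicoeff_swap, bicoeff_implicitResultant_swap, bicoeff, hzero, coeff_zero, mul_zero]

theorem exists_implicitResultant_eq_mul (hdeg₀ : (P 0).natDegree ≤ n) (hdeg₁ : (P 1).natDegree ≤ n)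
    (hdeg₂ : (P 2).natDegree ≤ m) (hdeg₃ : (P 3).natDegree ≤ m) (hn : n ≠ 0) (hm : m ≠ 0)
    (hx : HasFullFiber L P n) (hy : HasFullFiber L (fun i => P (i + 2)) m)
    (hR : implicitResultant (P 0) (P 1) (P 2) (P 3) n m ≠ 0) {ψ : K[X][X]} (hψ : Irreducible ψ)
    (h0 : curveEval P ψ = 0) :
    ∃ κ : K, κ ≠ 0 ∧ implicitResultant (P 0) (P 1) (P 2) (P 3) n m = ψ * C (C κ) := by
  have hle := hx.le_natDegree hn hψ h0
  have hle' := hy.le_natDegree hm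
    ((MulEquiv.irreducible_iff (Bivariate.swap (R := K)).toMulEquiv).2 hψ)
    ((curveEval_swap P ψ).trans h0)
  obtain ⟨hP₁, hP₃⟩ := hx.ne_zero hn
  have hinj := IsFractionRing.injective K[X] (RatFunc K)
  have hcancel {p q : K[X]} (hq : q ≠ 0) :
      algebraMap K[X] (RatFunc K) p / algebraMap K[X] (RatFunc K) q * aeval RatFunc.X q =
        aeval RatFunc.X p := by
    simp only [RatFunc.aeval_X_left_eq_algebraMap]
    exact div_mul_cancel₀ _ ((map_ne_zero_iff _ hinj).2 hq)
  have hzero : curveEval P (implicitResultant (P 0) (P 1) (P 2) (P 3) n m) = 0 :=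
    aevalAeval_implicitResultant hdeg₀ hdeg₁ hdeg₂ hdeg₃ hn (hcancel hP₁) (hcancel hP₃)
  exact exists_eq_mul_C_C_of_dvd
    (dvd_of_aevalAeval_eq_zero (hx.transcendental hn) hψ (by omega) h0 hzero) hR
    ((natDegree_implicitResultant_le _ _ hdeg₁ hdeg₃).trans hle)
    ((natDegree_swap_implicitResultant_le _ _ hdeg₁ hdeg₃).trans hle')

theorem mem_support_iff_bicoeff_implicitResultant_ne_zero (hdeg₀ : (P 0).natDegree ≤ n)
    (hdeg₁ : (P 1).natDegree ≤ n) (hdeg₂ : (P 2).natDegree ≤ m) (hdeg₃ : (P 3).natDegree ≤ m)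
    (hn : n ≠ 0) (hm : m ≠ 0) (hx : HasFullFiber L P n)
    (hy : HasFullFiber L (fun i => P (i + 2)) m)
    (hR : implicitResultant (P 0) (P 1) (P 2) (P 3) n m ≠ 0) {φ : MvPolynomial (Fin 2) K}
    (hφ : Irreducible φ)
    (h0 : MvPolynomial.aeval
      ![algebraMap K[X] (RatFunc K) (P 0) / algebraMap K[X] (RatFunc K) (P 1),
        algebraMap K[X] (RatFunc K) (P 2) / algebraMap K[X] (RatFunc K) (P 3)] φ = 0)
    (d : Fin 2 →₀ ℕ) :
    d ∈ φ.support ↔ bicoeff (implicitResultant (P 0) (P 1) (P 2) (P 3) n m) (d 0) (d 1) ≠ 0 := by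
  obtain ⟨ψ, rfl⟩ := (Bivariate.equivMvPolynomial K).surjective φ
  rw [aeval_equivMvPolynomial] at h0
  obtain ⟨κ, hκ, hRψ⟩ := exists_implicitResultant_eq_mul hdeg₀ hdeg₁ hdeg₂ hdeg₃ hn hm hx hy hR
    ((MulEquiv.irreducible_iff (Bivariate.equivMvPolynomial K).toMulEquiv).1 hφ) h0
  rw [MvPolynomial.mem_support_iff, coeff_equivMvPolynomial, hRψ, bicoeff, bicoeff, coeff_mul_C,
    coeff_mul_C]
  simp [hκ]

end ImplicitEquation

/-! ### Supporting lines of planar convex hulls -/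

section SupportingLine

variable {A : Set (ℝ × ℝ)} {u v w w' : ℝ × ℝ}

/-- The linear form on the plane with coefficients `w`. -/
noncomputable def planeForm (w : ℝ × ℝ) : ℝ × ℝ →L[ℝ] ℝ :=
  w.1 • ContinuousLinearMap.fst ℝ ℝ ℝ + w.2 • ContinuousLinearMap.snd ℝ ℝ ℝ

lemma planeForm_apply (w x : ℝ × ℝ) : planeForm w x = w.1 * x.1 + w.2 * x.2 := rfl

/-- `v` is a point of `A` through which `A` has a supporting line with outer normal `w`. -/
structure SupportedAt (A : Set (ℝ × ℝ)) (w v : ℝ × ℝ) : Prop where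
  mem : v ∈ A
  le : ∀ x ∈ A, planeForm w x ≤ planeForm w v

namespace SupportedAt

lemma le_of_mem_convexHull (h : SupportedAt A w v) {x : ℝ × ℝ} (hx : x ∈ convexHull ℝ A) :
    planeForm w x ≤ planeForm w v :=
  convexHull_min h.le (convex_halfSpace_le (planeForm w).isLinear _) hx

theorem mem_extremePoints (h : SupportedAt A w v) (h' : SupportedAt A w' v)
    (hdet : w.1 * w'.2 - w.2 * w'.1 ≠ 0) : v ∈ Set.extremePoints ℝ (convexHull ℝ A) := by
  refine exposedPoints_subset_extremePoints ⟨subset_convexHull ℝ A h.mem,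
    planeForm w + planeForm w', fun x hx => ?_⟩
  have h₁ := h.le_of_mem_convexHull hx
  have h₂ := h'.le_of_mem_convexHull hx
  refine ⟨add_le_add h₁ h₂, fun hle => ?_⟩
  simp only [add_apply] at hle
  have e₁ : planeForm w x = planeForm w v := by linarith
  have e₂ : planeForm w' x = planeForm w' v := by linarith
  rw [planeForm_apply, planeForm_apply] at e₁ e₂
  exact Prod.ext (mul_left_cancel₀ hdet (by linear_combination w'.2 * e₁ - w.2 * e₂))
    (mul_left_cancel₀ hdet (by linear_combination w.1 * e₂ - w'.1 * e₁))

theorem segment_subset_frontier (hw : w ≠ 0) (hu : SupportedAt A w u) (hv : SupportedAt A w v) :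
    segment ℝ u v ⊆ frontier (convexHull ℝ A) := by
  intro x hx
  have hxA : x ∈ convexHull ℝ A := segment_subset_convexHull hu.mem hv.mem hx
  have hle : planeForm w v ≤ planeForm w x :=
    (convex_halfSpace_ge (planeForm w).isLinear _).segment_subset (hu.le v hv.mem)
      (le_refl (planeForm w v)) hx
  refine ⟨subset_closure hxA, fun hint => ?_⟩
  have hsurj : Function.Surjective (planeForm w) := by
    refine LinearMap.surjective (f := (planeForm w : ℝ × ℝ →ₗ[ℝ] ℝ)) fun h0 => hw ?_
    exact Prod.ext (by simpa [planeForm_apply] using DFunLike.congr_fun h0 (1, 0))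
      (by simpa [planeForm_apply] using DFunLike.congr_fun h0 (0, 1))
  have hIio : planeForm w '' interior (convexHull ℝ A) ⊆ Set.Iio (planeForm w v) := by
    rw [← interior_Iic]
    refine interior_maximal ?_ ((planeForm w).isOpenMap hsurj _ isOpen_interior)
    rintro _ ⟨y, hy, rfl⟩
    exact hv.le_of_mem_convexHull (interior_subset hy)
  exact (hIio ⟨x, hint, rfl⟩).not_ge hle

end SupportedAt

end SupportingLine

/-! ### The upper right corner -/

section CornerGeometry

variable {A : Set (ℝ × ℝ)} {n m : ℝ} {l k : ℝ × ℝ}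

/-- `A` lies below and to the left of the sum of `(m, n)` and the two segments from `(-l.2, 0)` to
`(0, -l.1)` and from `(-k.2, 0)` to `(0, -k.1)`, and contains the two end points of this sum. The
first condition is expressed by support functions in nonnegative directions. -/
structure IsCutCorner (A : Set (ℝ × ℝ)) (n m : ℝ) (l k : ℝ × ℝ) : Prop where
  low : l = 0 ∨ 0 < l.1 ∧ 0 < l.2
  high : k = 0 ∨ 0 < k.1 ∧ 0 < k.2
  right_mem : (m, n - l.1 - k.1) ∈ A
  top_mem : (m - l.2 - k.2, n) ∈ A
  le : ∀ w : ℝ × ℝ, 0 ≤ w.1 → 0 ≤ w.2 → ∀ x ∈ A, planeForm w x ≤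
    m * w.1 + n * w.2 - min (w.1 * l.2) (w.2 * l.1) - min (w.1 * k.2) (w.2 * k.1)

namespace IsCutCorner

lemma swap (h : IsCutCorner A n m l k) : IsCutCorner A n m k l where
  low := h.high
  high := h.low
  right_mem := by simpa only [sub_right_comm] using h.right_mem
  top_mem := by simpa only [sub_right_comm] using h.top_mem
  le w hw₁ hw₂ x hx := by linarith [h.le w hw₁ hw₂ x hx]

lemma low_nonneg (h : IsCutCorner A n m l k) : 0 ≤ l.1 ∧ 0 ≤ l.2 := by
  rcases h.low with rfl | hl
  exacts [⟨le_rfl, le_rfl⟩, ⟨hl.1.le, hl.2.le⟩]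

lemma supportedAt (h : IsCutCorner A n m l k) {w v : ℝ × ℝ} (hw₁ : 0 ≤ w.1) (hw₂ : 0 ≤ w.2)
    (hv : v ∈ A) (hle : m * w.1 + n * w.2 - min (w.1 * l.2) (w.2 * l.1) -
      min (w.1 * k.2) (w.2 * k.1) ≤ w.1 * v.1 + w.2 * v.2) : SupportedAt A w v :=
  ⟨hv, fun x hx => (h.le w hw₁ hw₂ x hx).trans hle⟩

lemma supportedAt_right (h : IsCutCorner A n m l k) : SupportedAt A (1, 0) (m, n - l.1 - k.1) :=
  h.supportedAt zero_le_one le_rfl h.right_mem (by simp [h.low_nonneg.2, h.swap.low_nonneg.2])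

lemma supportedAt_top (h : IsCutCorner A n m l k) : SupportedAt A (0, 1) (m - l.2 - k.2, n) :=
  h.supportedAt le_rfl zero_le_one h.top_mem (by simp [h.low_nonneg.1, h.swap.low_nonneg.1])

lemma low_supportedAt_right (h : IsCutCorner A n m l k) (hδ : k.1 * l.2 ≤ l.1 * k.2) :
    SupportedAt A l (m, n - l.1 - k.1) := by
  refine h.supportedAt h.low_nonneg.1 h.low_nonneg.2 h.right_mem ?_
  rw [mul_comm l.2 l.1, min_self, min_eq_right (by linarith)]
  linarith

lemma low_supportedAt_top (h : IsCutCorner A n m l k) (hδ : l.1 * k.2 ≤ k.1 * l.2) :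
    SupportedAt A l (m - l.2 - k.2, n) := by
  refine h.supportedAt h.low_nonneg.1 h.low_nonneg.2 h.top_mem ?_
  rw [mul_comm l.2 l.1, min_self, min_eq_left (by linarith)]
  linarith

lemma high_supportedAt_right (h : IsCutCorner A n m l k) (hδ : l.1 * k.2 ≤ k.1 * l.2) :
    SupportedAt A k (m, n - l.1 - k.1) := by
  simpa only [sub_right_comm] using h.swap.low_supportedAt_right hδ

lemma high_supportedAt_top (h : IsCutCorner A n m l k) (hδ : k.1 * l.2 ≤ l.1 * k.2) :
    SupportedAt A k (m - l.2 - k.2, n) := by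
  simpa only [sub_right_comm] using h.swap.low_supportedAt_top hδ

lemma supportedAt_inner (h : IsCutCorner A n m l k) (hδ : k.1 * l.2 ≤ l.1 * k.2)
    (hp : (m - l.2, n - k.1) ∈ A) :
    SupportedAt A l (m - l.2, n - k.1) ∧ SupportedAt A k (m - l.2, n - k.1) := by
  constructor
  · refine h.supportedAt h.low_nonneg.1 h.low_nonneg.2 hp ?_
    rw [mul_comm l.2 l.1, min_self, min_eq_right (by linarith)]
    linarith
  · refine h.supportedAt h.swap.low_nonneg.1 h.swap.low_nonneg.2 hp ?_
    rw [mul_comm k.2 k.1, min_self, min_eq_left (by linarith)]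
    linarith

lemma pos_of_lt (h : IsCutCorner A n m l k) (hδ : k.1 * l.2 < l.1 * k.2) :
    (0 < l.1 ∧ 0 < l.2) ∧ 0 < k.1 ∧ 0 < k.2 :=
  ⟨h.low.resolve_left fun hl => by simp [hl] at hδ,
    h.high.resolve_left fun hk => by simp [hk] at hδ⟩

lemma exists_supportedAt_of_eq (h : IsCutCorner A n m l k) (hlk : l ≠ 0 ∨ k ≠ 0)
    (hδ : k.1 * l.2 = l.1 * k.2) : ∃ w : ℝ × ℝ, (0 < w.1 ∧ 0 < w.2) ∧
      SupportedAt A w (m, n - l.1 - k.1) ∧ SupportedAt A w (m - l.2 - k.2, n) := by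
  rcases hlk with hl | hk
  · exact ⟨l, h.low.resolve_left hl, h.low_supportedAt_right hδ.le, h.low_supportedAt_top hδ.ge⟩
  · exact ⟨k, h.high.resolve_left hk, h.high_supportedAt_right hδ.ge, h.high_supportedAt_top hδ.le⟩

theorem right_mem_extremePoints (h : IsCutCorner A n m l k) (hlk : l ≠ 0 ∨ k ≠ 0) :
    (m, n - l.1 - k.1) ∈ Set.extremePoints ℝ (convexHull ℝ A) := by
  obtain ⟨w, hw, hsupp⟩ : ∃ w : ℝ × ℝ, 0 < w.2 ∧ SupportedAt A w (m, n - l.1 - k.1) := by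
    rcases lt_trichotomy (k.1 * l.2) (l.1 * k.2) with hδ | hδ | hδ
    · exact ⟨l, (h.pos_of_lt hδ).1.2, h.low_supportedAt_right hδ.le⟩
    · obtain ⟨w, hw, hsupp, -⟩ := h.exists_supportedAt_of_eq hlk hδ
      exact ⟨w, hw.2, hsupp⟩
    · exact ⟨k, (h.swap.pos_of_lt hδ).1.2, h.high_supportedAt_right hδ.le⟩
  exact h.supportedAt_right.mem_extremePoints hsupp (by simpa using hw.ne')

theorem top_mem_extremePoints (h : IsCutCorner A n m l k) (hlk : l ≠ 0 ∨ k ≠ 0) :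
    (m - l.2 - k.2, n) ∈ Set.extremePoints ℝ (convexHull ℝ A) := by
  obtain ⟨w, hw, hsupp⟩ : ∃ w : ℝ × ℝ, 0 < w.1 ∧ SupportedAt A w (m - l.2 - k.2, n) := by
    rcases lt_trichotomy (k.1 * l.2) (l.1 * k.2) with hδ | hδ | hδ
    · exact ⟨k, (h.pos_of_lt hδ).2.1, h.high_supportedAt_top hδ.le⟩
    · obtain ⟨w, hw, -, hsupp⟩ := h.exists_supportedAt_of_eq hlk hδ
      exact ⟨w, hw.1, hsupp⟩
    · exact ⟨l, (h.swap.pos_of_lt hδ).2.1, h.low_supportedAt_top hδ.le⟩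
  exact h.supportedAt_top.mem_extremePoints hsupp (by simpa using hw.ne')

theorem segment_subset_frontier (h : IsCutCorner A n m l k) (hlk : l ≠ 0 ∨ k ≠ 0)
    (hδ : k.1 * l.2 = l.1 * k.2) :
    segment ℝ (m, n - l.1 - k.1) (m - l.2 - k.2, n) ⊆ frontier (convexHull ℝ A) := by
  obtain ⟨w, hw, hright, htop⟩ := h.exists_supportedAt_of_eq hlk hδ
  exact hright.segment_subset_frontier (by rintro rfl; exact hw.1.false) htop

theorem inner_of_lt (h : IsCutCorner A n m l k) (hδ : k.1 * l.2 < l.1 * k.2)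
    (hp : (m - l.2, n - k.1) ∈ A) :
    (m - l.2, n - k.1) ∈ Set.extremePoints ℝ (convexHull ℝ A) ∧
      segment ℝ (m, n - l.1 - k.1) (m - l.2, n - k.1) ⊆ frontier (convexHull ℝ A) ∧
      segment ℝ (m - l.2, n - k.1) (m - l.2 - k.2, n) ⊆ frontier (convexHull ℝ A) := by
  obtain ⟨hl, hk⟩ := h.pos_of_lt hδ
  obtain ⟨hpl, hpk⟩ := h.supportedAt_inner hδ.le hp
  exact ⟨hpl.mem_extremePoints hpk (by linarith),
    (h.low_supportedAt_right hδ.le).segment_subset_frontier (by rintro rfl; exact hl.1.false) hpl,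
    hpk.segment_subset_frontier (by rintro rfl; exact hk.1.false) (h.high_supportedAt_top hδ.le)⟩

theorem inner (h : IsCutCorner A n m l k) {p : ℝ × ℝ}
    (hlt : k.1 * l.2 < l.1 * k.2 → p = (m - l.2, n - k.1))
    (hgt : l.1 * k.2 < k.1 * l.2 → p = (m - k.2, n - l.1)) (hp : p ∈ A)
    (hδ : k.1 * l.2 ≠ l.1 * k.2) :
    p ∈ Set.extremePoints ℝ (convexHull ℝ A) ∧
      segment ℝ (m, n - l.1 - k.1) p ⊆ frontier (convexHull ℝ A) ∧
      segment ℝ p (m - l.2 - k.2, n) ⊆ frontier (convexHull ℝ A) := by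
  rcases hδ.lt_or_gt with hδ | hδ
  · obtain rfl := hlt hδ
    exact h.inner_of_lt hδ hp
  · obtain rfl := hgt hδ
    simpa only [sub_right_comm] using h.swap.inner_of_lt hδ hp

end IsCutCorner

end CornerGeometry

section ImplicitCorner

universe u

variable {K : Type u} [Field K] {SS : Fin 4 → Finset ℕ} {n m : ℕ}

lemma lowCut_ne_zero_iff {S S' : Finset ℕ} (hS : S.Nonempty) :
    lowCut S S' hS ≠ 0 ↔ 0 ∉ S ∧ 0 ∉ S' := by
  have hmin : S.min' hS = 0 ↔ 0 ∈ S :=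
    ⟨fun h => h ▸ S.min'_mem hS, fun h => Nat.le_zero.1 (S.min'_le 0 h)⟩
  rw [lowCut]
  split_ifs with h <;> simp [h, hmin]

lemma highCut_ne_zero_iff {S S' : Finset ℕ} (hS : S.Nonempty) (hn : ∀ s ∈ S, s ≤ n) :
    highCut S S' hS n m ≠ 0 ↔ n ∉ S ∧ m ∉ S' := by
  have hmax : n - S.max' hS = 0 ↔ n ∈ S :=
    ⟨fun h => (hn _ (S.max'_mem hS)).antisymm (Nat.sub_eq_zero_iff_le.1 h) ▸ S.max'_mem hS,
      fun h => Nat.sub_eq_zero_of_le (S.le_max' n h)⟩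
  rw [highCut]
  split_ifs with h <;> simp [h, hmax]

/-- The ordinate of the highest point of the implicit Newton polygon on its right side `x = m`,
where `S` and `S'` are the supports of the denominators of `x` and `y`. Exchanging the two
coordinates, it is also the abscissa of the rightmost point on the upper side `y = n`. -/
def cornerHeight (S S' : Finset ℕ) (hS : S.Nonempty) (n m : ℕ) : ℕ :=
  S.max' hS - S.min' hS + (if 0 ∈ S' then S.min' hS else 0) +
    (if m ∈ S' then n - S.max' hS else 0)

lemma sub_lowCut_sub_highCut {S S' : Finset ℕ} (hS : S.Nonempty) (hn : ∀ s ∈ S, s ≤ n) :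
    n - lowCut S S' hS - highCut S S' hS n m = cornerHeight S S' hS n m := by
  have hmax := hn _ (S.max'_mem hS)
  have hmin := S.min'_le _ (S.max'_mem hS)
  rw [lowCut, highCut, cornerHeight]
  split_ifs <;> omega

/-- The exponents of the monomials of `φ`, as points of the plane. -/
def exponentPoints (φ : MvPolynomial (Fin 2) K) : Set (ℝ × ℝ) :=
  (fun d : Fin 2 →₀ ℕ => ((d 0 : ℝ), (d 1 : ℝ))) '' ↑φ.support

/-- `φ` is an implicit equation of the parametrized curve `x = P₀ / Q₀`, `y = P₁ / Q₁`, where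
`P₀, Q₀, P₁, Q₁` have the supports `SS` and the coefficients `c`. -/
structure IsImplicitEquation (SS : Fin 4 → Finset ℕ) (c : CoeffIndex SS → K)
    (φ : MvPolynomial (Fin 2) K) : Prop where
  irreducible : Irreducible φ
  aeval_eq_zero : MvPolynomial.aeval
    ![algebraMap K[X] (RatFunc K) (coeffPoly SS c 0) /
        algebraMap K[X] (RatFunc K) (coeffPoly SS c 1),
      algebraMap K[X] (RatFunc K) (coeffPoly SS c 2) /
        algebraMap K[X] (RatFunc K) (coeffPoly SS c 3)] φ = 0

/-- None of the denominators contains an extreme exponent, so that both cuts are proper. -/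
def HasTwoCuts (SS : Fin 4 → Finset ℕ) (n m : ℕ) : Prop :=
  0 ∉ SS 1 ∧ 0 ∉ SS 3 ∧ n ∉ SS 1 ∧ m ∉ SS 3

namespace NormalizedSupports

theorem generically_mem_support_iff [CharZero K] (h : NormalizedSupports SS n m) {i j : ℕ}
    (hij : GenericallyOccurs K SS n m i j) :
    Generically fun c : CoeffIndex SS → K => ∀ φ, IsImplicitEquation SS c φ →
      ∀ d, d ∈ φ.support ↔ bicoeff (implicitResultant (coeffPoly SS c 0) (coeffPoly SS c 1)
        (coeffPoly SS c 2) (coeffPoly SS c 3) n m) (d 0) (d 1) ≠ 0 := by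
  have hx := h.generically_hasFullFiber (K := K) (L := AlgebraicClosure K)
  have hy := Generically.reindex (SS := SS) (e := (· + 2)) (add_left_injective 2)
    (p := fun P : Fin 4 → K[X] => HasFullFiber (AlgebraicClosure K) P m)
    h.swap.generically_hasFullFiber
  refine ((hx.and hy).and hij).mono fun c ⟨⟨hx, hy⟩, hij⟩ φ hφ => ?_
  have hdeg₀ {i} (hi : i = 0 ∨ i = 1) : (coeffPoly SS c i).natDegree ≤ n :=
    natDegree_coeffPoly_le fun s hs => h.le₀ s (by rcases hi with rfl | rfl <;> simp [hs])
  have hdeg₁ {i} (hi : i = 2 ∨ i = 3) : (coeffPoly SS c i).natDegree ≤ m :=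
    natDegree_coeffPoly_le fun s hs => h.le₁ s (by rcases hi with rfl | rfl <;> simp [hs])
  exact mem_support_iff_bicoeff_implicitResultant_ne_zero (hdeg₀ (.inl rfl)) (hdeg₀ (.inr rfl))
    (hdeg₁ (.inl rfl)) (hdeg₁ (.inr rfl)) h.ne_zero₀ h.ne_zero₁ hx hy
    (fun h0 => hij (by simp [h0, bicoeff])) hφ.irreducible hφ.aeval_eq_zero

theorem generically_mem_exponentPoints [CharZero K] (h : NormalizedSupports SS n m) {i j : ℕ}
    (hij : GenericallyOccurs K SS n m i j) :
    Generically fun c : CoeffIndex SS → K => ∀ φ, IsImplicitEquation SS c φ →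
      ((i : ℝ), (j : ℝ)) ∈ exponentPoints φ :=
  ((h.generically_mem_support_iff hij).and hij).mono fun c ⟨hc, hij⟩ φ hφ =>
    ⟨Finsupp.equivFunOnFinite.symm ![i, j], (hc φ hφ _).2 (by simpa using hij), by simp⟩

/-- The cuts of the rectangle `[0, m] × [0, n]` caused by the exponents of the denominators at the
end `0`, in the convention of `IsCutCorner`. -/
def lowCuts (h : NormalizedSupports SS n m) : ℝ × ℝ :=
  (lowCut (SS 1) (SS 3) (h.nonempty 1), lowCut (SS 3) (SS 1) (h.nonempty 3))

/-- The cuts of the rectangle `[0, m] × [0, n]` caused by the exponents of the denominators at the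
ends `n` and `m`, in the convention of `IsCutCorner`. -/
def highCuts (h : NormalizedSupports SS n m) : ℝ × ℝ :=
  (highCut (SS 1) (SS 3) (h.nonempty 1) n m, highCut (SS 3) (SS 1) (h.nonempty 3) m n)

lemma le_den₀ (h : NormalizedSupports SS n m) : ∀ s ∈ SS 1, s ≤ n :=
  fun s hs => h.le₀ s (Finset.mem_union_right _ hs)

lemma le_den₁ (h : NormalizedSupports SS n m) : ∀ s ∈ SS 3, s ≤ m :=
  h.swap.le_den₀

lemma lowCut_add_highCut_le (h : NormalizedSupports SS n m) :
    lowCut (SS 1) (SS 3) (h.nonempty 1) + highCut (SS 1) (SS 3) (h.nonempty 1) n m ≤ n := by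
  obtain ⟨k, hk⟩ := h.nonempty 1
  exact (Nat.add_le_add_right (lowCut_le _ hk) _).trans
    (add_highCut_le _ h.le_den₀ hk)

lemma planeForm_le (h : NormalizedSupports SS n m) {c : CoeffIndex SS → K}
    {φ : MvPolynomial (Fin 2) K} (hφ : ∀ d, d ∈ φ.support → bicoeff (implicitResultant
      (coeffPoly SS c 0) (coeffPoly SS c 1) (coeffPoly SS c 2) (coeffPoly SS c 3) n m)
        (d 0) (d 1) ≠ 0)
    {w : ℝ × ℝ} (hw₁ : 0 ≤ w.1) (hw₂ : 0 ≤ w.2) {x : ℝ × ℝ} (hx : x ∈ exponentPoints φ) :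
    planeForm w x ≤ m * w.1 + n * w.2 - min (w.1 * h.lowCuts.2) (w.2 * h.lowCuts.1) -
      min (w.1 * h.highCuts.2) (w.2 * h.highCuts.1) := by
  obtain ⟨d, hd, rfl⟩ := hx
  exact weightLE_implicitResultant hw₁ hw₂ _ _ h.lowCut_add_highCut_le h.swap.lowCut_add_highCut_le
    (fun k hk => ⟨lowCut_le _ (mem_of_coeff_coeffPoly_ne_zero hk), add_highCut_le _ h.le_den₀
      (mem_of_coeff_coeffPoly_ne_zero hk)⟩)
    (fun k hk => ⟨lowCut_le _ (mem_of_coeff_coeffPoly_ne_zero hk), add_highCut_le _ h.le_den₁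
      (mem_of_coeff_coeffPoly_ne_zero hk)⟩)
    _ _ (hφ d hd)

lemma lowCuts_pos_iff (h : NormalizedSupports SS n m) :
    0 < h.lowCuts.1 ∧ 0 < h.lowCuts.2 ↔ 0 ∉ SS 1 ∧ 0 ∉ SS 3 := by
  have h₁ := lowCut_ne_zero_iff (S' := SS 3) (h.nonempty 1)
  have h₃ := lowCut_ne_zero_iff (S' := SS 1) (h.nonempty 3)
  simp only [lowCuts, Nat.cast_pos, Nat.pos_iff_ne_zero]
  tauto

lemma lowCuts_ne_zero_iff (h : NormalizedSupports SS n m) :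
    h.lowCuts ≠ 0 ↔ 0 ∉ SS 1 ∧ 0 ∉ SS 3 := by
  have h₁ := lowCut_ne_zero_iff (S' := SS 3) (h.nonempty 1)
  have h₃ := lowCut_ne_zero_iff (S' := SS 1) (h.nonempty 3)
  simp only [lowCuts, ne_eq, Prod.ext_iff, Prod.fst_zero, Prod.snd_zero, Nat.cast_eq_zero]
  tauto

lemma highCuts_pos_iff (h : NormalizedSupports SS n m) :
    0 < h.highCuts.1 ∧ 0 < h.highCuts.2 ↔ n ∉ SS 1 ∧ m ∉ SS 3 := by
  have h₁ := highCut_ne_zero_iff (S' := SS 3) (m := m) (h.nonempty 1) h.le_den₀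
  have h₃ := highCut_ne_zero_iff (S' := SS 1) (m := n) (h.nonempty 3) h.le_den₁
  simp only [highCuts, Nat.cast_pos, Nat.pos_iff_ne_zero]
  tauto

lemma highCuts_ne_zero_iff (h : NormalizedSupports SS n m) :
    h.highCuts ≠ 0 ↔ n ∉ SS 1 ∧ m ∉ SS 3 := by
  have h₁ := highCut_ne_zero_iff (S' := SS 3) (m := m) (h.nonempty 1) h.le_den₀
  have h₃ := highCut_ne_zero_iff (S' := SS 1) (m := n) (h.nonempty 3) h.le_den₁
  simp only [highCuts, ne_eq, Prod.ext_iff, Prod.fst_zero, Prod.snd_zero, Nat.cast_eq_zero]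
  tauto

lemma coe_cornerHeight_right (h : NormalizedSupports SS n m) :
    (cornerHeight (SS 1) (SS 3) (h.nonempty 1) n m : ℝ) = n - h.lowCuts.1 - h.highCuts.1 := by
  rw [← sub_lowCut_sub_highCut _ h.le_den₀, Nat.sub_sub, Nat.cast_sub h.lowCut_add_highCut_le,
    Nat.cast_add, ← sub_sub]
  rfl

lemma coe_cornerHeight_top (h : NormalizedSupports SS n m) :
    (cornerHeight (SS 3) (SS 1) (h.nonempty 3) m n : ℝ) = m - h.lowCuts.2 - h.highCuts.2 :=
  h.swap.coe_cornerHeight_right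

theorem generically_isCutCorner [CharZero K] (h : NormalizedSupports SS n m)
    (h₁ : ¬(0 ∈ SS 1 ∧ n ∈ SS 1)) (h₃ : ¬(0 ∈ SS 3 ∧ m ∈ SS 3)) :
    Generically fun c : CoeffIndex SS → K => ∀ φ, IsImplicitEquation SS c φ →
      IsCutCorner (exponentPoints φ) n m h.lowCuts h.highCuts := by
  have htop := h.genericallyOccurs_top (K := K) h₁
  have hright := h.genericallyOccurs_right (K := K) h₃
  rw [sub_lowCut_sub_highCut _ h.le_den₁] at htop
  rw [sub_lowCut_sub_highCut _ h.le_den₀] at hright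
  refine (((h.generically_mem_support_iff htop).and (h.generically_mem_exponentPoints htop)).and
    (h.generically_mem_exponentPoints hright)).mono fun c ⟨⟨hsupp, htop⟩, hright⟩ φ hφ => ?_
  exact {
    low := Classical.or_iff_not_imp_left.2 (h.lowCuts_pos_iff.2 <| h.lowCuts_ne_zero_iff.1 ·)
    high := Classical.or_iff_not_imp_left.2 (h.highCuts_pos_iff.2 <| h.highCuts_ne_zero_iff.1 ·)
    right_mem := h.coe_cornerHeight_right ▸ hright φ hφ
    top_mem := h.coe_cornerHeight_top ▸ htop φ hφ
    le := fun w hw₁ hw₂ x hx => h.planeForm_le (fun d => (hsupp φ hφ d).1) hw₁ hw₂ hx }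

/-- The quantity `δ` of the paper: the determinant of the two cuts if both are proper. -/
def cornerDet (h : NormalizedSupports SS n m) : ℤ :=
  ((n : ℤ) - ((SS 1).max' (h.nonempty 1) : ℤ)) * ((SS 3).min' (h.nonempty 3) : ℤ) -
    ((SS 1).min' (h.nonempty 1) : ℤ) * ((m : ℤ) - ((SS 3).max' (h.nonempty 3) : ℤ))

/-- The point `p` of the paper: the vertex between the two cuts if these are not parallel. -/
noncomputable def innerCorner (h : NormalizedSupports SS n m) : ℝ × ℝ :=
  if h.cornerDet < 0 then
    (((m - (SS 3).min' (h.nonempty 3) : ℕ) : ℝ), (((SS 1).max' (h.nonempty 1) : ℕ) : ℝ))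
  else
    ((((SS 3).max' (h.nonempty 3) : ℕ) : ℝ), ((n - (SS 1).min' (h.nonempty 1) : ℕ) : ℝ))

lemma cuts_eq (h : NormalizedSupports SS n m) (h2 : HasTwoCuts SS n m) :
    h.lowCuts = (((SS 1).min' (h.nonempty 1) : ℝ), ((SS 3).min' (h.nonempty 3) : ℝ)) ∧
    h.highCuts = (n - ((SS 1).max' (h.nonempty 1) : ℝ), m - ((SS 3).max' (h.nonempty 3) : ℝ)) := by
  obtain ⟨h01, h03, hn, hm⟩ := h2
  simp [lowCuts, highCuts, lowCut, highCut, h01, h03, hn, hm,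
    h.le_den₀ _ ((SS 1).max'_mem _), h.le_den₁ _ ((SS 3).max'_mem _)]

lemma coe_cornerDet (h : NormalizedSupports SS n m) (h2 : HasTwoCuts SS n m) :
    (h.cornerDet : ℝ) = h.highCuts.1 * h.lowCuts.2 - h.lowCuts.1 * h.highCuts.2 := by
  simp [h.cuts_eq h2, cornerDet]

lemma hasTwoCuts_and_cornerDet_ne_zero_iff (h : NormalizedSupports SS n m) :
    HasTwoCuts SS n m ∧ h.cornerDet ≠ 0 ↔
      h.highCuts.1 * h.lowCuts.2 ≠ h.lowCuts.1 * h.highCuts.2 := by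
  have hdet (h2 : HasTwoCuts SS n m) :
      h.cornerDet ≠ 0 ↔ h.highCuts.1 * h.lowCuts.2 ≠ h.lowCuts.1 * h.highCuts.2 := by
    rw [← Int.cast_ne_zero (α := ℝ), h.coe_cornerDet h2, sub_ne_zero]
  refine ⟨fun ⟨h2, hδ⟩ => (hdet h2).1 hδ, fun hne => ?_⟩
  have hl : h.lowCuts ≠ 0 := fun h0 => by simp [h0] at hne
  have hk : h.highCuts ≠ 0 := fun h0 => by simp [h0] at hne
  rw [lowCuts_ne_zero_iff] at hl
  rw [highCuts_ne_zero_iff] at hk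
  have h2 : HasTwoCuts SS n m := ⟨hl.1, hl.2, hk⟩
  exact ⟨h2, (hdet h2).2 hne⟩

lemma innerCorner_of_lt (h : NormalizedSupports SS n m) (h2 : HasTwoCuts SS n m)
    (hδ : h.highCuts.1 * h.lowCuts.2 < h.lowCuts.1 * h.highCuts.2) :
    h.innerCorner = (m - h.lowCuts.2, n - h.highCuts.1) := by
  have hneg : h.cornerDet < 0 := by
    rw [← Int.cast_lt_zero (R := ℝ), h.coe_cornerDet h2]
    exact sub_neg.2 hδ
  rw [innerCorner, if_pos hneg, Nat.cast_sub (h.le_den₁ _ ((SS 3).min'_mem _))]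
  simp [h.cuts_eq h2]

lemma innerCorner_of_gt (h : NormalizedSupports SS n m) (h2 : HasTwoCuts SS n m)
    (hδ : h.lowCuts.1 * h.highCuts.2 < h.highCuts.1 * h.lowCuts.2) :
    h.innerCorner = (m - h.highCuts.2, n - h.lowCuts.1) := by
  have hpos : ¬h.cornerDet < 0 := by
    rw [← Int.cast_lt_zero (R := ℝ), h.coe_cornerDet h2]
    exact not_lt_of_gt (sub_pos.2 hδ)
  rw [innerCorner, if_neg hpos, Nat.cast_sub (h.le_den₀ _ ((SS 1).min'_mem _))]
  simp [h.cuts_eq h2]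

lemma generically_innerCorner_mem [CharZero K] (h : NormalizedSupports SS n m)
    (h2 : HasTwoCuts SS n m) :
    Generically fun c : CoeffIndex SS → K => ∀ φ, IsImplicitEquation SS c φ →
      h.innerCorner ∈ exponentPoints φ := by
  obtain ⟨h01, h03, hn, hm⟩ := h2
  rw [innerCorner]
  split_ifs
  · exact h.generically_mem_exponentPoints (h.swap.genericallyOccurs_inner h01 hm).swap
  · exact h.generically_mem_exponentPoints (h.genericallyOccurs_inner h03 hn)

lemma cuts_ne_zero (h : NormalizedSupports SS n m)
    (hF : cornerHeight (SS 1) (SS 3) (h.nonempty 1) n m ≠ n) :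
    h.lowCuts ≠ 0 ∨ h.highCuts ≠ 0 := by
  contrapose! hF with h0
  rw [← Nat.cast_inj (R := ℝ), h.coe_cornerHeight_right]
  simp [h0]

lemma cornerHeight_top_ne (h : NormalizedSupports SS n m)
    (hlk : h.lowCuts ≠ 0 ∨ h.highCuts ≠ 0) :
    cornerHeight (SS 3) (SS 1) (h.nonempty 3) m n ≠ m := by
  rw [ne_eq, ← Nat.cast_inj (R := ℝ), h.coe_cornerHeight_top, sub_sub, sub_eq_self]
  have hl : 0 ≤ h.lowCuts.2 := Nat.cast_nonneg _
  have hk : 0 ≤ h.highCuts.2 := Nat.cast_nonneg _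
  rcases hlk with hl' | hk'
  · linarith [(h.lowCuts_pos_iff.2 (h.lowCuts_ne_zero_iff.1 hl')).2]
  · linarith [(h.highCuts_pos_iff.2 (h.highCuts_ne_zero_iff.1 hk')).2]

lemma of_gcd (hne : ∀ i, (SS i).Nonempty) (h00 : 0 ∈ SS 0 ∪ SS 1) (h01 : 0 ∈ SS 2 ∪ SS 3)
    (hgcd : ((SS 0 ∪ SS 1 ∪ SS 2 ∪ SS 3).filter (fun s => s ≠ 0)).gcd id = 1)
    (hn : n ∈ SS 0 ∪ SS 1) (hnmax : ∀ s ∈ SS 0 ∪ SS 1, s ≤ n)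
    (hm : m ∈ SS 2 ∪ SS 3) (hmmax : ∀ s ∈ SS 2 ∪ SS 3, s ≤ m) (hn1 : 1 ≤ n) (hm1 : 1 ≤ m) :
    NormalizedSupports SS n m where
  nonempty := hne
  zero_mem₀ := h00
  zero_mem₁ := h01
  mem₀ := hn
  mem₁ := hm
  le₀ := hnmax
  le₁ := hmmax
  ne_zero₀ := Nat.one_le_iff_ne_zero.1 hn1
  ne_zero₁ := Nat.one_le_iff_ne_zero.1 hm1
  gcd_eq_one d h₀ h₁ := by
    refine Nat.dvd_one.1 (hgcd ▸ Finset.dvd_gcd fun s hs => ?_)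
    rw [Finset.mem_filter, Finset.union_assoc, Finset.mem_union] at hs
    exact hs.1.elim (h₀ s) (h₁ s)

end NormalizedSupports

theorem implicit_upper_right_corner_general [CharZero K] (h : NormalizedSupports SS n m)
    {v v' : ℝ × ℝ} (hv : v = (↑m, ↑(cornerHeight (SS 1) (SS 3) (h.nonempty 1) n m)))
    (hv' : v' = (↑(cornerHeight (SS 3) (SS 1) (h.nonempty 3) m n), ↑n))
    (hF : cornerHeight (SS 1) (SS 3) (h.nonempty 1) n m ≠ n) :
    (((0 ∉ SS 1 ∧ 0 ∉ SS 3) ∨ (n ∉ SS 1 ∧ m ∉ SS 3)) ∧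
      cornerHeight (SS 3) (SS 1) (h.nonempty 3) m n ≠ m) ∧
    Generically fun c : CoeffIndex SS → K => ∀ φ, IsImplicitEquation SS c φ →
      v ∈ Set.extremePoints ℝ (convexHull ℝ (exponentPoints φ)) ∧
      v' ∈ Set.extremePoints ℝ (convexHull ℝ (exponentPoints φ)) ∧
      (¬(HasTwoCuts SS n m ∧ h.cornerDet ≠ 0) →
        segment ℝ v v' ⊆ frontier (convexHull ℝ (exponentPoints φ))) ∧
      (HasTwoCuts SS n m ∧ h.cornerDet ≠ 0 →
        h.innerCorner ∈ Set.extremePoints ℝ (convexHull ℝ (exponentPoints φ)) ∧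
        segment ℝ v h.innerCorner ⊆ frontier (convexHull ℝ (exponentPoints φ)) ∧
        segment ℝ h.innerCorner v' ⊆ frontier (convexHull ℝ (exponentPoints φ))) := by
  have hlk := h.cuts_ne_zero hF
  have hends : (0 ∉ SS 1 ∧ 0 ∉ SS 3) ∨ (n ∉ SS 1 ∧ m ∉ SS 3) :=
    hlk.imp h.lowCuts_ne_zero_iff.1 h.highCuts_ne_zero_iff.1
  refine ⟨⟨hends, h.cornerHeight_top_ne hlk⟩, ?_⟩
  have hcut := h.generically_isCutCorner (K := K) (by tauto) (by tauto)
  have hinner := Generically.of_imp (h.generically_innerCorner_mem (K := K))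
  refine (hcut.and hinner).mono fun c ⟨hcut, hinner⟩ φ hφ => ?_
  rw [hv, hv', h.coe_cornerHeight_right, h.coe_cornerHeight_top,
    h.hasTwoCuts_and_cornerDet_ne_zero_iff, not_not]
  refine ⟨(hcut φ hφ).right_mem_extremePoints hlk, (hcut φ hφ).top_mem_extremePoints hlk,
    (hcut φ hφ).segment_subset_frontier hlk, fun hδ => ?_⟩
  have h2 := (h.hasTwoCuts_and_cornerDet_ne_zero_iff.2 hδ).1
  exact (hcut φ hφ).inner (h.innerCorner_of_lt h2) (h.innerCorner_of_gt h2) (hinner h2 φ hφ) hδ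

end ImplicitCorner

/-- The upper right corner of the implicit Newton polygon (different denominators).
`SS 0, SS 1, SS 2, SS 3` are the supports of `P₀, Q₀, P₁, Q₁`. -/
theorem implicit_upper_right_corner (SS : Fin 4 → Finset ℕ) (hne : ∀ i, (SS i).Nonempty)
    (h00 : 0 ∈ SS 0 ∪ SS 1) (h01 : 0 ∈ SS 2 ∪ SS 3)
    (hgcd : ((SS 0 ∪ SS 1 ∪ SS 2 ∪ SS 3).filter (fun s => s ≠ 0)).gcd id = 1)
    (a0n a1m : ℕ)
    (ha0nmem : a0n ∈ SS 0 ∪ SS 1) (ha0nmax : ∀ s ∈ SS 0 ∪ SS 1, s ≤ a0n)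
    (ha1mmem : a1m ∈ SS 2 ∪ SS 3) (ha1mmax : ∀ s ∈ SS 2 ∪ SS 3, s ≤ a1m)
    (ha0n1 : 1 ≤ a0n) (ha1m1 : 1 ≤ a1m)
    (F F' : ℕ) (δ : ℤ)
    (hF : F = ((SS 1).max' (hne 1) - (SS 1).min' (hne 1)) +
      (if 0 ∈ SS 3 then (SS 1).min' (hne 1) else 0) +
      (if a1m ∈ SS 3 then a0n - (SS 1).max' (hne 1) else 0))
    (hF' : F' = ((SS 3).max' (hne 3) - (SS 3).min' (hne 3)) +
      (if 0 ∈ SS 1 then (SS 3).min' (hne 3) else 0) +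
      (if a0n ∈ SS 1 then a1m - (SS 3).max' (hne 3) else 0))
    (hδ : δ = ((a0n : ℤ) - ((SS 1).max' (hne 1) : ℤ)) * ((SS 3).min' (hne 3) : ℤ) -
      ((SS 1).min' (hne 1) : ℤ) * ((a1m : ℤ) - ((SS 3).max' (hne 3) : ℤ)))
    (hFne : F ≠ a0n) :
    (((0 ∉ SS 1 ∧ 0 ∉ SS 3) ∨ (a0n ∉ SS 1 ∧ a1m ∉ SS 3)) ∧ F' ≠ a1m) ∧
    ∃ G : MvPolynomial (Σ i : Fin 4, {s // s ∈ SS i}) ℂ, G ≠ 0 ∧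
      ∀ c : (Σ i : Fin 4, {s // s ∈ SS i}) → ℂ, MvPolynomial.eval c G ≠ 0 →
        ∀ φ : MvPolynomial (Fin 2) ℂ, Irreducible φ → vanishesDiff SS c φ →
          ((a1m : ℝ), (F : ℝ)) ∈ Set.extremePoints ℝ (newtonPolygon φ) ∧
          ((F' : ℝ), (a0n : ℝ)) ∈ Set.extremePoints ℝ (newtonPolygon φ) ∧
          (¬ ((0 ∉ SS 1 ∧ 0 ∉ SS 3 ∧ a0n ∉ SS 1 ∧ a1m ∉ SS 3) ∧ δ ≠ 0) →
            segment ℝ ((a1m : ℝ), (F : ℝ)) ((F' : ℝ), (a0n : ℝ)) ⊆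
              frontier (newtonPolygon φ)) ∧
          ((0 ∉ SS 1 ∧ 0 ∉ SS 3 ∧ a0n ∉ SS 1 ∧ a1m ∉ SS 3) ∧ δ ≠ 0 →
            (if δ < 0 then
                (((a1m - (SS 3).min' (hne 3) : ℕ) : ℝ), (((SS 1).max' (hne 1) : ℕ) : ℝ))
              else
                ((((SS 3).max' (hne 3) : ℕ) : ℝ), ((a0n - (SS 1).min' (hne 1) : ℕ) : ℝ)))
                ∈ Set.extremePoints ℝ (newtonPolygon φ) ∧
            segment ℝ ((a1m : ℝ), (F : ℝ))
              (if δ < 0 then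
                  (((a1m - (SS 3).min' (hne 3) : ℕ) : ℝ), (((SS 1).max' (hne 1) : ℕ) : ℝ))
                else
                  ((((SS 3).max' (hne 3) : ℕ) : ℝ), ((a0n - (SS 1).min' (hne 1) : ℕ) : ℝ)))
              ⊆ frontier (newtonPolygon φ) ∧
            segment ℝ
              (if δ < 0 then
                  (((a1m - (SS 3).min' (hne 3) : ℕ) : ℝ), (((SS 1).max' (hne 1) : ℕ) : ℝ))
                else
                  ((((SS 3).max' (hne 3) : ℕ) : ℝ), ((a0n - (SS 1).min' (hne 1) : ℕ) : ℝ)))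
              ((F' : ℝ), (a0n : ℝ)) ⊆ frontier (newtonPolygon φ)) := by
  subst hF hF' hδ
  obtain ⟨hends, G, hG, hgen⟩ := implicit_upper_right_corner_general (K := ℂ)
    (.of_gcd hne h00 h01 hgcd ha0nmem ha0nmax ha1mmem ha1mmax ha0n1 ha1m1) rfl rfl hFne
  exact ⟨hends, G, hG, fun c hc φ hirr hφ => hgen c hc φ ⟨hirr, hφ⟩⟩
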